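/- There exists an absolute constant C > 0 such that for every prime power q, every n, every admissible tuple (a,b,c), and every finite set A' ⊆ F_q^n, there exists a subset I ⊆ A' that is a cap set for (a,b,c) and satisfies |I| ≥ C · ∑_{x∈A'} (d_x + 1)^{−1/3}, where d_x denotes the number of pairs (y,z) ∈ (A')^2 with ax+by+cz = 0. -/

import Mathlib

section CWHelpers
open Finset

/-- Cap sets for the equation `p • (x - y) = q • (z - y)`. -/
def CWCap {R M : Type*} [CommRing R] [AddCommGroup M] [Module R M] (p q : R)
    (C : Finset M) : Prop :=
  ∀ x ∈ C, ∀ y ∈ C, ∀ z ∈ C, p • (x - y) = q • (z - y) → x = y ∧ z = y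

open Classical in
/-- number of solutions (including the trivial ones) in `S`. -/
noncomputable def cwSol {F W : Type*} [Field F] [AddCommGroup W] [Module F W] (t : F)
    (S : Finset W) : ℕ :=
  ((S ×ˢ S).filter (fun p => p.1 + t • (p.2 - p.1) ∈ S)).card

open Classical in
/-- number of nontrivial solutions in `S`. -/
noncomputable def cwNon {F W : Type*} [Field F] [AddCommGroup W] [Module F W] (t : F)
    (S : Finset W) : ℕ :=
  ((S ×ˢ S).filter (fun p => p.1 + t • (p.2 - p.1) ∈ S ∧ p.2 ≠ p.1)).card

/-- structured sets -/
def CWData (F : Type) [Field F] (t : F) (η β : ℝ) : Prop :=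
  ∃ (W : Type) (_ : AddCommGroup W) (_ : Module F W) (_ : Fintype W) (S : Finset W),
    η * (Fintype.card W : ℝ) ≤ S.card ∧
      (cwSol t S : ℝ) ≤ β * S.card * Fintype.card W

lemma cw_remove {F W : Type*} [Field F] [AddCommGroup W] [Module F W] (t : F)
    (S : Finset W) : ∃ I ⊆ S, CWCap 1 t I ∧ S.card ≤ I.card + cwNon t S := by
  classical
  let N := (S ×ˢ S).filter (fun p => p.1 + t • (p.2 - p.1) ∈ S ∧ p.2 ≠ p.1)
  refine ⟨S \ N.image Prod.fst, sdiff_subset, ?_, ?_⟩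
  · intro x hx y hy z hz h
    rw [mem_sdiff] at hx hy hz
    have hxy : x = y + t • (z - y) := by rw [← h]; simp
    have : z = y := by
      by_contra hne
      apply hy.2
      rw [mem_image]
      refine ⟨(y, z), ?_, rfl⟩
      simp only [N, mem_filter, mem_product]
      exact ⟨⟨hy.1, hz.1⟩, hxy ▸ hx.1, hne⟩
    subst this
    simpa using hxy
  · have h1 := le_card_sdiff (N.image Prod.fst) S
    have h2 : (N.image Prod.fst).card ≤ N.card := card_image_le
    have h3 : cwNon t S = N.card := by unfold cwNon; congr
    omega

lemma cw_eval_card {F V W : Type*} [Field F] [AddCommGroup V] [Module F V] [AddCommGroup W]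
    [Module F W] [Fintype W] [Fintype (V →ₗ[F] W)] [DecidableEq W] (v : V) (hv : v ≠ 0) (w : W) :
    (univ.filter (fun L : V →ₗ[F] W => L v = w)).card * Fintype.card W
      = Fintype.card (V →ₗ[F] W) := by
  classical
  let f : (V →ₗ[F] W) →+ W := { toFun := fun L => L v, map_zero' := rfl, map_add' := fun _ _ => rfl }
  have hs : Function.Surjective f := by
    intro w
    obtain ⟨φ, hφ⟩ := Module.Projective.exists_dual_eq_one F hv
    exact ⟨φ.smulRight w, by simp [f, hφ]⟩
  have h := Finset.card_eq_sum_card_fiberwise (f := f) (s := univ) (t := univ) (by simp)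
  rw [Finset.card_univ] at h
  rw [h]
  have : ∀ b ∈ (univ : Finset W), (univ.filter (fun L : V →ₗ[F] W => f L = b)).card =
     (univ.filter (fun L : V →ₗ[F] W => L v = w)).card := by
    intro b _
    exact AddMonoidHom.card_fiber_eq_of_mem_range f (hs b) (hs w)
  rw [sum_congr rfl this]
  simp [mul_comm]

lemma cw_pull {F V W : Type*} [Field F] [AddCommGroup V] [Module F V] [Fintype V] [AddCommGroup W]
    [Module F W] [Fintype W] (t : F) (A : Finset V) (S : Finset W) :
    ∃ I ⊆ A, CWCap 1 t I ∧
     (A.card : ℝ) * S.card * Fintype.card W - (cwNon t A : ℝ) * cwSol t S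
       ≤ I.card * (Fintype.card W : ℝ)^2 := by
  classical
  have : Fintype (V →ₗ[F] W) := @Fintype.ofFinite _ (DFunLike.finite _)
  let H := V →ₗ[F] W
  let Aω : H × W → Finset V := fun ω => A.filter (fun x => ω.1 x + ω.2 ∈ S)
  have h1 : ∑ ω : H × W, (Aω ω).card = A.card * S.card * Fintype.card H := by
    simp only [Aω, card_filter]
    rw [sum_comm]
    have : ∀ x ∈ A, ∑ ω : H × W, (if ω.1 x + ω.2 ∈ S then 1 else 0) = Fintype.card H * S.card := by
      intro x _
      rw [Fintype.sum_prod_type]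
      have : ∀ L : H, ∑ σ : W, (if L x + σ ∈ S then 1 else 0) = S.card := by
        intro L
        have := Equiv.sum_comp (Equiv.addLeft (L x)) (fun σ => if σ ∈ S then 1 else 0)
        simp only [Equiv.coe_addLeft] at this
        refine Eq.trans ?_ (this.trans (by simp))
        congr
      simp [this]
    rw [sum_congr rfl this]
    simp; ring
  have h2 : (∑ ω : H × W, cwNon t (Aω ω)) * Fintype.card W = cwNon t A * cwSol t S * Fintype.card H := by
    have e1 : ∀ ω, cwNon t (Aω ω) = ∑ p ∈ (A ×ˢ A).filter (fun p => p.1 + t • (p.2 - p.1) ∈ A ∧ p.2 ≠ p.1),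
        if (ω.1 p.1 + ω.2 ∈ S ∧ ω.1 p.2 + ω.2 ∈ S ∧ ω.1 (p.1 + t • (p.2 - p.1)) + ω.2 ∈ S) then 1 else 0 := by
      intro ω
      rw [← card_filter, filter_filter]
      unfold cwNon
      congr 1
      ext p
      simp only [Aω, mem_filter, mem_product]
      tauto
    simp_rw [e1]
    rw [sum_comm, sum_mul]
    have : ∀ p ∈ (A ×ˢ A).filter (fun p => p.1 + t • (p.2 - p.1) ∈ A ∧ p.2 ≠ p.1),
       (∑ ω : H × W, if (ω.1 p.1 + ω.2 ∈ S ∧ ω.1 p.2 + ω.2 ∈ S ∧ ω.1 (p.1 + t • (p.2 - p.1)) + ω.2 ∈ S) then 1 else 0)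
         * Fintype.card W = cwSol t S * Fintype.card H := by
      intro p hp
      have hne : p.2 - p.1 ≠ 0 := sub_ne_zero.2 (mem_filter.1 hp).2.2
      rw [← card_filter]
      have hf := Finset.card_eq_sum_card_fiberwise 
        (f := fun ω : H × W => (ω.1 p.1 + ω.2, ω.1 p.2 + ω.2)) 
        (s := univ.filter (fun ω : H × W => (ω.1 p.1 + ω.2 ∈ S ∧ ω.1 p.2 + ω.2 ∈ S ∧ ω.1 (p.1 + t • (p.2 - p.1)) + ω.2 ∈ S)))
        (t := (S ×ˢ S).filter (fun p => p.1 + t • (p.2 - p.1) ∈ S)) (by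
          intro ω hω
          simp only [coe_filter, mem_univ, true_and, Set.mem_ofPred_eq, mem_product] at hω ⊢
          refine ⟨⟨hω.1, hω.2.1⟩, ?_⟩
          convert hω.2.2 using 1
          simp only [map_add, map_smul, map_sub, smul_sub, smul_add]
          abel)
      rw [hf, sum_mul]
      have : ∀ b ∈ (S ×ˢ S).filter (fun p => p.1 + t • (p.2 - p.1) ∈ S),
         (filter (fun ω : H × W => (ω.1 p.1 + ω.2, ω.1 p.2 + ω.2) = b) (univ.filter (fun ω : H × W => (ω.1 p.1 + ω.2 ∈ S ∧ ω.1 p.2 + ω.2 ∈ S ∧ ω.1 (p.1 + t • (p.2 - p.1)) + ω.2 ∈ S)))).card * Fintype.card W = Fintype.card H := by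
        intro b hb
        rw [← cw_eval_card (p.2 - p.1) hne (b.2 - b.1)]
        congr 1
        apply card_bij (fun ω _ => ω.1)
        · intro ω hω
          simp only [mem_filter, mem_univ, true_and] at hω ⊢
          rw [← hω.2]
          simp
        · rintro ⟨L, σ⟩ h ⟨L', σ'⟩ h' hh
          simp only [mem_filter, mem_univ, true_and] at h h' hh
          subst hh
          have := h.2.trans h'.2.symm
          simp at this
          simp [this]
        · intro L hL
          simp only [mem_filter, mem_univ, true_and, mem_product] at hL hb
          rw [map_sub] at hL
          have e1 : L p.1 + (b.1 - L p.1) = b.1 := by abel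
          have e2 : L p.2 + (b.1 - L p.1) = b.2 := by 
            have : L p.2 = b.2 - b.1 + L p.1 := by rw [← hL]; abel
            rw [this]; abel
          have e3 : L (p.1 + t • (p.2 - p.1)) + (b.1 - L p.1) = b.1 + t • (b.2 - b.1) := by
            rw [map_add, map_smul, map_sub, hL]; abel
          refine ⟨(L, b.1 - L p.1), ?_, rfl⟩
          simp only [mem_filter, mem_univ, true_and, e1, e2, e3]
          exact ⟨⟨hb.1.1, hb.1.2, hb.2⟩, trivial⟩
      rw [sum_congr rfl this]
      simp only [sum_const, smul_eq_mul]
      congr 1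
      try (unfold cwSol; congr)
    rw [sum_congr rfl this]
    simp only [sum_const, smul_eq_mul]
    rw [mul_assoc]
    congr 1
    try (unfold cwNon; congr)
  have hH : (0:ℝ) < Fintype.card H := by
    have : Nonempty H := ⟨0⟩
    exact_mod_cast Fintype.card_pos
  have hW : (0:ℝ) < Fintype.card W := by
    have : Nonempty W := ⟨0⟩
    exact_mod_cast Fintype.card_pos
  obtain ⟨ω, -, hω⟩ := Finset.exists_le_of_sum_le (s := (univ : Finset (H × W)))
    (f := fun _ => ((A.card : ℝ) * S.card * Fintype.card W - (cwNon t A : ℝ) * cwSol t S) / (Fintype.card W : ℝ)^2)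
    (g := fun ω => ((Aω ω).card : ℝ) - cwNon t (Aω ω)) univ_nonempty (by
      rw [sum_sub_distrib]
      have h1' : ∑ ω : H × W, ((Aω ω).card : ℝ) = A.card * S.card * Fintype.card H := by exact_mod_cast h1
      have h2' : (∑ ω : H × W, (cwNon t (Aω ω) : ℝ)) * Fintype.card W = cwNon t A * cwSol t S * Fintype.card H := by 
        exact_mod_cast h2
      have h2'' : (∑ ω : H × W, (cwNon t (Aω ω) : ℝ)) = cwNon t A * cwSol t S * Fintype.card H / Fintype.card W := by
        rw [eq_div_iff hW.ne', h2']
      rw [h1', h2'']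
      simp only [sum_const, card_univ, Fintype.card_prod, nsmul_eq_mul]
      push_cast
      apply le_of_eq
      field_simp)
  obtain ⟨I, hI, hcap, hc⟩ := cw_remove t (Aω ω)
  refine ⟨I, hI.trans (filter_subset _ _), hcap, ?_⟩
  rw [div_le_iff₀ (by positivity)] at hω
  refine hω.trans ?_
  gcongr
  have : ((Aω ω).card : ℝ) ≤ I.card + cwNon t (Aω ω) := by exact_mod_cast hc
  linarith

lemma cw_sol_pi {F W : Type*} [Field F] [AddCommGroup W] [Module F W] (t : F)
    (S : Finset W) (k : ℕ) :
    cwSol t (Fintype.piFinset (fun _ : Fin k => S)) ≤ cwSol t S ^ k := by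
  classical
  have : cwSol t S ^ k = (Fintype.piFinset (fun _ : Fin k =>
      ((S ×ˢ S).filter (fun p => p.1 + t • (p.2 - p.1) ∈ S)))).card := by
    rw [Fintype.card_piFinset]
    simp only [prod_const, card_univ, Fintype.card_fin]
    rfl
  rw [this]
  unfold cwSol
  apply card_le_card_of_injOn (fun p i => (p.1 i, p.2 i))
  · intro p hp
    simp only [coe_filter, mem_product, Fintype.mem_piFinset, Set.mem_ofPred_eq] at hp
    simp only [Fintype.coe_piFinset, coe_filter, mem_product, Set.mem_pi, Set.mem_univ,
      Set.mem_ofPred_eq, forall_const]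
    intro i
    exact ⟨⟨hp.1.1 i, hp.1.2 i⟩, hp.2 i⟩
  · intro p _ q _ h
    have h1 : ∀ i, p.1 i = q.1 i ∧ p.2 i = q.2 i := by
      intro i
      have := congrFun h i
      simpa using this
    exact Prod.ext (funext fun i => (h1 i).1) (funext fun i => (h1 i).2)

lemma cw_uni (η β : ℝ) (hη : 0 < η) (hβ : 0 < β) (hβη : β < η ^ 3) :
    ∃ c : ℝ, 0 < c ∧ ∃ e : ℝ, 0 ≤ e ∧ e < 1/3 ∧
      ∀ (F : Type) [Field F] (t : F), CWData F t η β →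
        ∀ (V : Type) [AddCommGroup V] [Module F V] [Fintype V] (A : Finset V) (d : ℝ), 1 ≤ d →
          (cwNon t A : ℝ) ≤ d * A.card →
          ∃ I ⊆ A, CWCap 1 t I ∧ c * A.card * d ^ (-e) ≤ I.card := by
  classical
  by_cases h1 : 1 < η
  · refine ⟨1, one_pos, 0, le_rfl, by norm_num, ?_⟩
    intro F _ t ⟨W, _, _, _, S, hS, _⟩
    exfalso
    have hW : (0:ℝ) < Fintype.card W := by
      have : Nonempty W := ⟨0⟩
      exact_mod_cast Fintype.card_pos
    have : (S.card : ℝ) ≤ Fintype.card W := by exact_mod_cast card_le_univ S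
    nlinarith
  push Not at h1
  have hβ1 : β < 1 := lt_of_lt_of_le hβη (pow_le_one₀ hη.le h1)
  have hlβ : Real.log β < 0 := Real.log_neg hβ hβ1
  have hlη : Real.log η ≤ 0 := Real.log_nonpos hη.le h1
  have hll : Real.log β < 3 * Real.log η := by
    have := Real.log_lt_log hβ hβη
    rwa [Real.log_pow] at this
  set e := Real.log η / Real.log β with he
  have he0 : 0 ≤ e := div_nonneg_of_nonpos hlη hlβ.le
  have he3 : e < 1/3 := by
    rw [he, div_lt_iff_of_neg hlβ]; linarith
  have hβe : β ^ e = η := by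
    rw [Real.rpow_def_of_pos hβ, he, mul_div_cancel₀ _ hlβ.ne, Real.exp_log hη]
  refine ⟨(β/2)^e/2, by positivity, e, he0, he3, ?_⟩
  intro F _ t ⟨W, _, _, _, S, hS, hN⟩ V _ _ _ A d hd hA
  have hW : (0:ℝ) < Fintype.card W := by
    have : Nonempty W := ⟨0⟩
    exact_mod_cast Fintype.card_pos
  obtain ⟨k', hk1, hk2⟩ := exists_nat_pow_near_of_lt_one (x := 1/(2*d)) (y := β) (by positivity)
    (by rw [div_le_one (by positivity)]; linarith) hβ hβ1
  set k := k' + 1 with hk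
  obtain ⟨I, hIA, hcap, hI⟩ := cw_pull t A (Fintype.piFinset (fun _ : Fin k => S))
  refine ⟨I, hIA, hcap, ?_⟩
  have hsol : (cwSol t (Fintype.piFinset (fun _ : Fin k => S)) : ℝ) ≤ (β * S.card * Fintype.card W)^k := by
    calc _ ≤ ((cwSol t S ^ k : ℕ) : ℝ) := by exact_mod_cast cw_sol_pi t S k
      _ ≤ _ := by push_cast; gcongr
  simp only [Fintype.card_piFinset, prod_const, card_univ, Fintype.card_fin, Fintype.card_pi] at hI
  push_cast at hI
  set w : ℝ := (Fintype.card W : ℝ)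
  set s : ℝ := (S.card : ℝ)
  have hs : 0 ≤ s := Nat.cast_nonneg _
  have hηk : η ^ k = (β^k) ^ e := by
    rw [← hβe, ← Real.rpow_natCast, ← Real.rpow_natCast, ← Real.rpow_mul hβ.le, ← Real.rpow_mul hβ.le, mul_comm]
  have hlow : (β/2)^e * d^(-e) ≤ η^k := by
    rw [hηk]
    have : (β/2)^e * d^(-e) = (β * (1/(2*d)))^e := by
      rw [Real.rpow_neg (by linarith), ← div_eq_mul_inv, ← Real.div_rpow (by positivity) (by linarith)]
      congr 1; field_simp
    rw [this]
    apply Real.rpow_le_rpow (by positivity) _ he0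
    rw [hk, pow_succ, mul_comm]
    gcongr
  have hmain : (A.card : ℝ) * η^k / 2 ≤ I.card := by
    have hw2 : 0 < w^k := by positivity
    have e1 : (cwNon t A : ℝ) * cwSol t (Fintype.piFinset (fun _ : Fin k => S)) ≤ d * A.card * (β * s * w)^k := by
      gcongr
    have e2 : d * A.card * (β * s * w)^k ≤ (1/2) * A.card * s^k*w^k := by
      have : d * β^k ≤ 1/2 := by
        calc d * β^k ≤ d * (1/(2*d)) := by gcongr
          _ = 1/2 := by field_simp
      calc _ = (d * β^k) * (A.card * s^k*w^k) := by rw [mul_pow, mul_pow]; ring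
        _ ≤ (1/2) * (A.card * s^k*w^k) := by gcongr
        _ = _ := by ring
    have e3 : η^k * w^k ≤ s^k := by rw [← mul_pow]; gcongr
    have e4 : (A.card:ℝ) * η^k * w^k * w^k ≤ A.card * s^k * w^k := by
      calc (A.card:ℝ) * η^k * w^k * w^k = A.card * (η^k*w^k) * w^k := by ring
        _ ≤ _ := by gcongr
    have e5 : ((A.card : ℝ) * η^k / 2) * (w^k)^2 ≤ I.card * (w^k)^2 := by
      linarith
    exact le_of_mul_le_mul_right e5 (by positivity)
  calc _ = (A.card:ℝ) * ((β/2)^e * d^(-e)) / 2 := by ring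
    _ ≤ (A.card:ℝ) * η^k/2 := by gcongr
    _ ≤ _ := hmain

open Classical in
/-- degree of `x` -/
noncomputable def cwDeg {F W : Type*} [Field F] [AddCommGroup W] [Module F W] (t : F)
    (S : Finset W) (x : W) : ℕ :=
  ((S ×ˢ S).filter (fun p => x = p.1 + t • (p.2 - p.1))).card

/-- the conclusion for `(F, t)` with constant `C`. -/
def CWGood (F : Type) [Field F] (t : F) (C : ℝ) : Prop :=
  ∀ (V : Type) [AddCommGroup V] [Module F V] [Fintype V] (A : Finset V),
    ∃ I ⊆ A, CWCap 1 t I ∧ C * ∑ x ∈ A, ((cwDeg t A x : ℝ) + 1) ^ (-(1/3 : ℝ)) ≤ I.card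

lemma CWGood.mono {F : Type} [Field F] {t : F} {C C' : ℝ} (h : CWGood F t C) (hC : C' ≤ C) :
    CWGood F t C' := by
  intro V _ _ _ A
  obtain ⟨I, h1, h2, h3⟩ := h V A
  refine ⟨I, h1, h2, le_trans ?_ h3⟩
  gcongr

lemma cw_non_le {F W : Type*} [Field F] [AddCommGroup W] [Module F W] (t : F)
    (A D : Finset W) (h : D ⊆ A) : cwNon t D ≤ ∑ x ∈ D, cwDeg t A x := by
  classical
  unfold cwNon
  rw [Finset.card_eq_sum_card_fiberwise (f := fun p : W × W => p.1 + t • (p.2 - p.1)) (t := D)]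
  · apply sum_le_sum
    intro x _
    unfold cwDeg
    apply card_le_card
    intro p hp
    simp only [mem_filter, mem_product] at hp ⊢
    exact ⟨⟨h hp.1.1.1, h hp.1.1.2⟩, hp.2.symm⟩
  · intro p hp
    simp only [coe_filter, Set.mem_ofPred_eq] at hp
    exact hp.2.1

lemma cw_good_of_data (η β : ℝ) (hη : 0 < η) (hβ : 0 < β) (hβη : β < η ^ 3) :
    ∃ C : ℝ, 0 < C ∧ ∀ (F : Type) [Field F] (t : F), CWData F t η β → CWGood F t C := by
  classical
  obtain ⟨c, hc, e, he0, he3, huni⟩ := cw_uni η β hη hβ hβη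
  set ρ : ℝ := 2 ^ (e - 1/3) with hρ
  have hρ0 : 0 < ρ := by positivity
  have hρ1 : ρ < 1 := Real.rpow_lt_one_of_one_lt_of_neg (by norm_num) (by linarith)
  refine ⟨c * 2^(-e) * (1-ρ), by have : 0 < 1 - ρ := by linarith
                                 positivity, ?_⟩
  intro F _ t hdata V _ _ _ A
  let lg : V → ℕ := fun x => Nat.log 2 (cwDeg t A x + 1)
  let D : ℕ → Finset V := fun j => A.filter (fun x => lg x = j)
  let N := A.sup lg + 1
  have hN : ∀ x ∈ A, lg x ∈ range N := by
    intro x hx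
    rw [mem_range]
    exact Nat.lt_succ_of_le (le_sup (f := lg) hx)
  have hI : ∀ j : ℕ, ∃ I ⊆ D j, CWCap 1 t I ∧ c * (D j).card * ((2:ℝ)^(j+1)) ^ (-e) ≤ I.card := by
    intro j
    apply huni F t hdata V (D j) (2^(j+1)) (one_le_pow₀ (by norm_num))
    have h1 := cw_non_le t A (D j) (filter_subset _ _)
    have h2 : ∑ x ∈ D j, cwDeg t A x ≤ ∑ x ∈ D j, 2^(j+1) := by
      apply sum_le_sum
      intro x hx
      have hx2 : Nat.log 2 (cwDeg t A x + 1) = j := (mem_filter.1 hx).2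
      have := Nat.lt_pow_succ_log_self (b := 2) (by norm_num) (cwDeg t A x + 1)
      rw [hx2] at this
      omega
    have h3 := h1.trans h2
    simp only [sum_const, smul_eq_mul] at h3
    have : (cwNon t (D j) : ℝ) ≤ ((D j).card * 2^(j+1) : ℕ) := by exact_mod_cast h3
    push_cast at this
    linarith
  choose I hID hIcap hIc using hI
  obtain ⟨j0, -, hj0⟩ := exists_max_image (range N) (fun j => (I j).card) ⟨0, by simp [N]⟩
  refine ⟨I j0, (hID j0).trans (filter_subset _ _), hIcap j0, ?_⟩
  set μ : ℝ := ((I j0).card : ℝ) with hμ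
  have hsum : ∑ x ∈ A, ((cwDeg t A x : ℝ) + 1) ^ (-(1/3 : ℝ)) ≤ ∑ j ∈ range N, (μ * c⁻¹ * 2^e) * ρ^j := by
    rw [← sum_fiberwise_of_maps_to hN]
    apply sum_le_sum
    intro j hj
    have hb : ∑ x ∈ A.filter (fun x => lg x = j), ((cwDeg t A x : ℝ) + 1) ^ (-(1/3 : ℝ)) ≤ 
        ∑ x ∈ A.filter (fun x => lg x = j), ((2:ℝ)^j) ^ (-(1/3 : ℝ)) := by
      apply sum_le_sum
      intro x hx
      have hx2 : Nat.log 2 (cwDeg t A x + 1) = j := (mem_filter.1 hx).2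
      have := Nat.pow_log_le_self 2 (x := cwDeg t A x + 1) (by omega)
      rw [hx2] at this
      have h' : ((2:ℝ)^j) ≤ (cwDeg t A x : ℝ) + 1 := by exact_mod_cast this
      exact Real.rpow_le_rpow_of_nonpos (by positivity) h' (by norm_num)
    refine hb.trans ?_
    simp only [sum_const, nsmul_eq_mul]
    have h4 := (hIc j).trans (show ((I j).card : ℝ) ≤ μ by rw [hμ]; exact_mod_cast hj0 j hj)
    have h5 : ((D j).card : ℝ) ≤ μ * c⁻¹ * ((2:ℝ)^(j+1))^e := by
      rw [Real.rpow_neg (by positivity)] at h4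
      have hp : (0:ℝ) < ((2:ℝ)^(j+1))^e := by positivity
      calc ((D j).card : ℝ) = (c * (D j).card * (((2:ℝ)^(j+1)) ^ e)⁻¹) * c⁻¹ * ((2:ℝ)^(j+1))^e := by
            field_simp
        _ ≤ _ := by gcongr
    calc _ ≤ μ * c⁻¹ * ((2:ℝ)^(j+1))^e * ((2:ℝ)^j) ^ (-(1/3 : ℝ)) := by gcongr
      _ = _ := by
        rw [hρ, ← Real.rpow_natCast, ← Real.rpow_natCast, ← Real.rpow_natCast, ← Real.rpow_mul (by norm_num), ← Real.rpow_mul (by norm_num), ← Real.rpow_mul (by norm_num), mul_assoc, mul_assoc (μ * c⁻¹),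
          ← Real.rpow_add (by norm_num), ← Real.rpow_add (by norm_num)]
        congr 2
        push_cast
        ring
  rw [← mul_sum] at hsum
  have hgeo : ∑ j ∈ range N, ρ^j ≤ 1/(1-ρ) := by
    rw [geom_sum_eq hρ1.ne, ← neg_div_neg_eq]
    have h0 : 0 < 1 - ρ := by linarith
    rw [neg_sub, neg_sub]
    gcongr
    have := pow_pos hρ0 N
    linarith
  have h0 : 0 < 1 - ρ := by linarith
  calc c * 2^(-e) * (1-ρ) * ∑ x ∈ A, ((cwDeg t A x : ℝ) + 1) ^ (-(1/3 : ℝ)) 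
     ≤ c * 2^(-e) * (1-ρ) * ((μ * c⁻¹ * 2^e) * (1/(1-ρ))) := by
        gcongr
        exact hsum.trans (by gcongr)
    _ = μ * (2^(-e) * 2^e) := by field_simp
    _ = μ := by rw [← Real.rpow_add (by norm_num)]; simp

lemma cw_aniso (F : Type) [Field F] [Finite F] :
    ∃ β : F, ∀ u v : F, u * u + u * v + β * (v * v) = 0 → u = 0 ∧ v = 0 := by
  have h : ¬ Function.Surjective (fun x : F => x * x + x) := by
    intro hs
    have := Finite.injective_iff_surjective.2 hs (a₁ := 0) (a₂ := -1) (by simp)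
    simp at this
  rw [Function.Surjective] at h
  push Not at h
  obtain ⟨γ, hγ⟩ := h
  refine ⟨-γ, fun u v huv => ?_⟩
  have hv : v = 0 := by
    by_contra hv
    apply hγ (u / v)
    field_simp
    linear_combination huv
  subst hv
  simpa using huv

open Classical in
lemma cw_quadric (F : Type) [Field F] [Fintype F] (t : F) (h0 : t ≠ 0) (h1 : t ≠ 1) :
    ∃ (P : F × F → F × F × F) (w : F × F × F), Function.Injective P ∧ (∀ a, P a ≠ w) ∧
      ∀ a b c, P a = P b + t • (P c - P b) → c = b := by
  obtain ⟨β, hβ⟩ := cw_aniso F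
  refine ⟨fun a => (a.1, a.2, a.1 * a.1 + a.1 * a.2 + β * (a.2 * a.2)), (0, 0, 1), ?_, ?_, ?_⟩
  · intro a b hab
    simp only [Prod.mk.injEq] at hab
    exact Prod.ext hab.1 hab.2.1
  · intro a h
    simp only [Prod.mk.injEq] at h
    obtain ⟨h1, h2, h3⟩ := h
    rw [h1, h2] at h3
    simp at h3
  · rintro ⟨a1, a2⟩ ⟨b1, b2⟩ ⟨c1, c2⟩ h
    simp only [Prod.mk_sub_mk, Prod.smul_mk, Prod.mk_add_mk, Prod.mk.injEq, smul_eq_mul] at h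
    obtain ⟨e1, e2, e3⟩ := h
    have hh : (t * (t - 1)) * ((c1 - b1) * (c1 - b1) + (c1 - b1) * (c2 - b2) + β * ((c2 - b2) * (c2 - b2))) = 0 := by
      rw [e1, e2] at e3
      linear_combination e3
    have ht : t * (t - 1) ≠ 0 := mul_ne_zero h0 (sub_ne_zero.2 h1)
    have := hβ _ _ ((mul_eq_zero.1 hh).resolve_left ht)
    rw [Prod.mk.injEq]
    exact ⟨sub_eq_zero.1 this.1, sub_eq_zero.1 this.2⟩

lemma cw_data_field (F : Type) [Field F] [Fintype F] (t : F) (h0 : t ≠ 0) (h1 : t ≠ 1) :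
    ∃ η β : ℝ, 0 < η ∧ 0 < β ∧ β < η ^ 3 ∧ CWData F t η β := by
  classical
  obtain ⟨P, w, hP, hPw, hcap⟩ := cw_quadric F t h0 h1
  set q := Fintype.card F with hq
  have hqpos : (0:ℝ) < q := by exact_mod_cast Fintype.card_pos
  let M := q^9
  let N := M + 1
  let U := F × F × F
  let S : Finset (Fin N → U) := univ.filter (fun p => ∃ i, p i = w ∧ ∀ j ≠ i, ∃ a, p j = P a)
  have hmem : ∀ p, p ∈ S ↔ ∃ i, p i = w ∧ ∀ j ≠ i, ∃ a, p j = P a := by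
    intro p; simp [S]
  have hScard : N * (q^2)^M ≤ S.card := by
    have : N * (q^2)^M = (univ : Finset (Fin N × (Fin M → F × F))).card := by
      simp [card_univ, Fintype.card_prod, N, hq, sq]
    rw [this]
    apply card_le_card_of_injOn (fun x => (x.1.insertNth w (fun j => P (x.2 j)) : Fin (M+1) → U))
    · intro x _
      simp only [mem_coe]
      rw [hmem]
      refine ⟨x.1, by simp, ?_⟩
      intro j hj
      obtain ⟨l, rfl⟩ := Fin.exists_succAbove_eq hj
      exact ⟨x.2 l, by simp⟩
    · rintro ⟨i, f⟩ _ ⟨i', f'⟩ _ h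
      simp only at h
      have hi : i = i' := by
        by_contra hne
        have := congrFun h i
        obtain ⟨l, hl⟩ := Fin.exists_succAbove_eq hne
        rw [Fin.insertNth_apply_same, ← hl, Fin.insertNth_apply_succAbove] at this
        exact hPw _ this.symm
      subst hi
      have : f = f' := by
        funext l
        have := congrFun h (i.succAbove l)
        rw [Fin.insertNth_apply_succAbove, Fin.insertNth_apply_succAbove] at this
        exact hP this
      rw [this]
  have hidx : ∀ p : Fin N → U, ∃ i : Fin N, p ∈ S → (p i = w ∧ ∀ j ≠ i, ∃ a, p j = P a) := by
    intro p
    by_cases h : p ∈ S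
    · obtain ⟨i, hi⟩ := (hmem p).1 h
      exact ⟨i, fun _ => hi⟩
    · exact ⟨0, fun h' => absurd h' h⟩
  choose idx hidx using hidx
  have hsol : cwSol t S ≤ S.card * (N * (N * (q * (q * q)))) := by
    have : S.card * (N * (N * (q * (q * q)))) = (S ×ˢ (univ : Finset (Fin N × Fin N × U))).card := by
      rw [card_product]
      simp [card_univ, Fintype.card_prod, U, hq]
    rw [this]
    unfold cwSol
    apply card_le_card_of_injOn (fun p => (p.1, idx (p.1 + t • (p.2 - p.1)), idx p.2, p.2 (idx p.1)))
    · intro p hp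
      simp only [coe_filter, mem_product, Set.mem_ofPred_eq] at hp
      simp [hp.1.1]
    · rintro ⟨y, z⟩ hp ⟨y', z'⟩ hp' h
      simp only [coe_filter, mem_product, Set.mem_ofPred_eq] at hp hp'
      simp only [Prod.mk.injEq] at h
      obtain ⟨rfl, hx, hz, hy⟩ := h
      simp only [Prod.mk.injEq, true_and]
      obtain ⟨⟨yS, zS⟩, xS⟩ := hp
      obtain ⟨⟨-, zS'⟩, xS'⟩ := hp'
      funext l
      by_cases ly : l = idx y
      · rw [ly]; exact hy
      by_cases lz : l = idx z
      · rw [lz, (hidx z zS).1, hz, (hidx z' zS').1]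
      by_cases lx : l = idx (y + t • (z - y))
      · have e1 := (hidx _ xS).1
        have e2 := (hidx _ xS').1
        rw [← hx, ← lx] at e2
        rw [← lx] at e1
        have := e1.trans e2.symm
        simp only [Pi.add_apply, Pi.smul_apply, Pi.sub_apply, add_right_inj] at this
        have := smul_right_injective U h0 this
        exact sub_left_injective this
      · obtain ⟨a, ha⟩ := (hidx y yS).2 l ly
        obtain ⟨b, hb⟩ := (hidx z zS).2 l lz
        obtain ⟨b', hb'⟩ := (hidx z' zS').2 l (by rw [← hz]; exact lz)
        obtain ⟨d, hd⟩ := (hidx _ xS).2 l lx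
        obtain ⟨d', hd'⟩ := (hidx _ xS').2 l (by rw [← hx]; exact lx)
        simp only [Pi.add_apply, Pi.smul_apply, Pi.sub_apply] at hd hd'
        rw [ha, hb] at hd
        rw [ha, hb'] at hd'
        rw [hb, hb', hcap _ _ _ hd.symm, hcap _ _ _ hd'.symm]
  have hNpos : (0:ℝ) < N := by positivity
  have hcardW : (Fintype.card (Fin N → U) : ℝ) = (q:ℝ)^(3*M+3) := by
    have : Fintype.card (Fin N → U) = q^(3*M+3) := by
      simp only [Fintype.card_pi, prod_const, card_univ, Fintype.card_fin, U, Fintype.card_prod, ← hq, N]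
      ring
    rw [this]; push_cast; rfl
  refine ⟨N * (q:ℝ)^(2*M) / (q:ℝ)^(3*M+3), N * N * (q:ℝ)^3 / (q:ℝ)^(3*M+3), by positivity, by positivity, ?_, 
    Fin N → U, inferInstance, inferInstance, inferInstance, S, ?_, ?_⟩
  · have hNq : (q:ℝ)^9 < N := by 
      have : q^9 < N := Nat.lt_succ_self _
      exact_mod_cast this
    rw [div_pow, div_lt_div_iff₀ (by positivity) (by positivity)]
    have e1 : (N * N * (q:ℝ)^3) * ((q:ℝ)^(3*M+3))^3 = (N * N * q^(9 * M + 3)) * q^9 := by ring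
    have e2 : (N * (q:ℝ)^(2*M))^3 * (q:ℝ)^(3*M+3) = (N * N * q^(9 * M + 3)) * N := by ring
    rw [e1, e2]
    gcongr
  · rw [hcardW, div_mul_cancel₀ _ (by positivity)]
    have : ((N * (q^2)^M : ℕ) : ℝ) ≤ S.card := by exact_mod_cast hScard
    push_cast at this
    rw [pow_mul]
    exact_mod_cast this
  · rw [hcardW]
    have : ((cwSol t S : ℕ) : ℝ) ≤ (S.card * (N * (N * (q * (q * q)))) : ℕ) := by exact_mod_cast hsol
    push_cast at this
    refine le_trans (le_of_le_of_eq this ?_) (le_of_eq (?_ : N * N * (q:ℝ)^3 * S.card = _))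
    · ring
    · field_simp

lemma cw_non_sq {F W : Type*} [Field F] [AddCommGroup W] [Module F W] (t : F)
    (S : Finset W) : cwNon t S ≤ S.card * S.card := by
  classical
  unfold cwNon
  refine (card_filter_le _ _).trans ?_
  rw [card_product]

lemma cw_field_cap (F : Type) [Field F] [Fintype F] (t : F) (h0 : t ≠ 0) (h1 : t ≠ 1) :
    ∃ m : ℕ, 1 ≤ m ∧ ∃ C : Finset (Fin m → F), CWCap 1 t C ∧
      Fintype.card F ^ (2 * m) < C.card ^ 3 := by
  classical
  obtain ⟨η, β, hη, hβ, hlt, hdata⟩ := cw_data_field F t h0 h1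
  obtain ⟨c, hc, e, he0, he3, huni⟩ := cw_uni η β hη hβ hlt
  set q := Fintype.card F with hq
  have hq1 : (1:ℝ) < q := by exact_mod_cast Fintype.one_lt_card
  obtain ⟨n, hn⟩ := pow_unbounded_of_one_lt (1/c^3) (y := (q:ℝ)^(1-3*e)) 
     (Real.one_lt_rpow hq1 (by linarith))
  have hn' : 1/c^3 < ((q:ℝ)^(1-3*e))^(n+1) := by
    refine hn.trans ?_
    apply pow_lt_pow_right₀ (Real.one_lt_rpow hq1 (by linarith)) (Nat.lt_succ_self n)
  refine ⟨n+1, by omega, ?_⟩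
  have hcard : ((univ : Finset (Fin (n+1) → F)).card : ℝ) = (q:ℝ)^(n+1) := by
    rw [card_univ, Fintype.card_pi]; simp [hq]
  obtain ⟨I, -, hcap, hI⟩ := huni F t hdata (Fin (n+1) → F) univ ((q:ℝ)^(n+1)) (one_le_pow₀ hq1.le) (by
    have : cwNon t (univ : Finset (Fin (n+1) → F)) ≤ (univ : Finset (Fin (n+1) → F)).card * (univ : Finset (Fin (n+1) → F)).card := by
      exact cw_non_sq t _
    have h' : (cwNon t (univ : Finset (Fin (n+1) → F)) : ℝ) ≤ (univ : Finset (Fin (n+1) → F)).card * (univ : Finset (Fin (n+1) → F)).card := by exact_mod_cast this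
    rw [hcard] at h' ⊢
    exact h')
  refine ⟨I, hcap, ?_⟩
  have hR : (q:ℝ)^(2*(n+1)) < (I.card:ℝ)^3 := by
    rw [hcard] at hI
    set Q : ℝ := (q:ℝ)^(n+1) with hQ
    have hQ0 : 0 < Q := by positivity
    have e1 : ((q:ℝ)^(1-3*e))^(n+1) = Q^(1-3*e) := by
      rw [hQ, ← Real.rpow_natCast, ← Real.rpow_natCast, ← Real.rpow_mul (by linarith), ← Real.rpow_mul (by linarith), mul_comm]
    rw [e1] at hn'
    calc (q:ℝ)^(2*(n+1)) = Q^2 * 1 := by rw [hQ]; ring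
      _ < Q^2 * (c^3 * Q^(1-3*e)) := by
        gcongr
        rw [div_lt_iff₀ (by positivity)] at hn'
        linarith
      _ = (c * Q * Q^(-e))^3 := by
        have : (Q^(-e))^3 = Q^(-(3*e)) := by
          rw [← Real.rpow_natCast, ← Real.rpow_mul hQ0.le]; congr 1; push_cast; ring
        rw [mul_pow, mul_pow, this, sub_eq_add_neg, Real.rpow_add hQ0, Real.rpow_one]
        ring
      _ ≤ _ := by gcongr
  exact_mod_cast hR

/-- existence of large caps in powers of a module -/
def CWMod {R : Type} [CommRing R] (p q : R) (m r : ℕ) (Q : Type) [AddCommGroup Q] [Module R Q] : Prop :=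
  ∃ C : Finset (Fin m → Q), CWCap p q C ∧ Nat.card Q ^ (2 * m * r + 1) ≤ C.card ^ (3 * r)

lemma CWCap.map_inj {R : Type} [CommRing R] {p q : R} {M M' : Type} [AddCommGroup M] [Module R M]
    [AddCommGroup M'] [Module R M'] [DecidableEq M'] {C : Finset M} (hC : CWCap p q C) (e : M ≃ₗ[R] M') :
    CWCap p q (C.image e) := by
  intro x hx y hy z hz h
  rw [mem_image] at hx hy hz
  obtain ⟨x, hx, rfl⟩ := hx
  obtain ⟨y, hy, rfl⟩ := hy
  obtain ⟨z, hz, rfl⟩ := hz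
  rw [← map_sub, ← map_sub, ← map_smul, ← map_smul] at h
  obtain ⟨h1, h2⟩ := hC x hx y hy z hz (e.injective h)
  exact ⟨by rw [h1], by rw [h2]⟩

lemma CWCap.pi {R : Type} [CommRing R] {p q : R} {M : Type} [AddCommGroup M] [Module R M]
    {C : Finset M} (hC : CWCap p q C) (k : ℕ) :
    CWCap p q (Fintype.piFinset (fun _ : Fin k => C)) := by
  intro x hx y hy z hz h
  rw [Fintype.mem_piFinset] at hx hy hz
  have := fun i => hC _ (hx i) _ (hy i) _ (hz i) (congrFun h i)
  exact ⟨funext fun i => (this i).1, funext fun i => (this i).2⟩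

lemma CWMod.equiv {R : Type} [CommRing R] {p q : R} {m r : ℕ} {Q Q' : Type} [AddCommGroup Q] [Module R Q]
    [AddCommGroup Q'] [Module R Q'] (h : CWMod p q m r Q) (e : Q ≃ₗ[R] Q') : CWMod p q m r Q' := by
  classical
  obtain ⟨C, hC, hc⟩ := h
  refine ⟨C.image (LinearEquiv.piCongrRight (fun _ : Fin m => e)), hC.map_inj _, ?_⟩
  rw [card_image_of_injective _ (LinearEquiv.injective _), ← Nat.card_congr e.toEquiv]
  exact hc

lemma CWMod.mono_r {R : Type} [CommRing R] {p q : R} {m r r' : ℕ} {Q : Type} [AddCommGroup Q] [Module R Q]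
    (h : CWMod p q m r Q) (h1 : 1 ≤ r) (hr : r ≤ r') [Finite Q] : CWMod p q m r' Q := by
  obtain ⟨C, hC, hc⟩ := h
  refine ⟨C, hC, ?_⟩
  have hq : 0 < Nat.card Q := Nat.card_pos
  have h2 : Nat.card Q ^ (2 * m) ≤ C.card ^ 3 := by
    apply le_of_pow_le_pow_left₀ (n := r) (by omega) (by positivity)
    rw [← pow_mul, ← pow_mul]
    exact le_trans (Nat.pow_le_pow_right hq (by omega)) hc
  obtain ⟨s, rfl⟩ := Nat.exists_eq_add_of_le hr
  calc Nat.card Q ^ (2 * m * (r + s) + 1) = Nat.card Q ^ (2 * m * r + 1) * (Nat.card Q ^ (2*m))^s := by ring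
    _ ≤ C.card ^ (3 * r) * (C.card ^ 3)^s := by gcongr
    _ = _ := by ring

lemma CWMod.mul {R : Type} [CommRing R] {p q : R} {m r k : ℕ} {Q : Type} [AddCommGroup Q] [Module R Q]
    (h : CWMod p q m r Q) (hk : 1 ≤ k) [Finite Q] : CWMod p q (k * m) r Q := by
  classical
  obtain ⟨C, hC, hc⟩ := h
  have hq : 0 < Nat.card Q := Nat.card_pos
  let e : (Fin k → Fin m → Q) ≃ₗ[R] (Fin (k * m) → Q) :=
    (LinearEquiv.curry R Q (Fin k) (Fin m)).symm ≪≫ₗ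
      LinearEquiv.funCongrLeft R Q finProdFinEquiv.symm
  refine ⟨(Fintype.piFinset (fun _ : Fin k => C)).image e, (hC.pi k).map_inj e, ?_⟩
  rw [card_image_of_injective _ (LinearEquiv.injective _), Fintype.card_piFinset]
  simp only [prod_const, card_univ, Fintype.card_fin]
  calc _ ≤ Nat.card Q ^ ((2 * m * r + 1) * k) := Nat.pow_le_pow_right hq (by nlinarith)
    _ = (Nat.card Q ^ (2 * m * r + 1))^k := by rw [pow_mul]
    _ ≤ (C.card ^ (3 * r))^k := by gcongr
    _ = _ := by rw [← pow_mul, ← pow_mul, mul_comm]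

lemma CWMod.ext {R : Type} [CommRing R] {p q : R} {m r : ℕ} {Q : Type} [AddCommGroup Q] [Module R Q]
    (Q' : Submodule R Q) (h' : CWMod p q m r Q') (h'' : CWMod p q m r (Q ⧸ Q')) : CWMod p q m r Q := by
  classical
  obtain ⟨C', hC', hc'⟩ := h'
  obtain ⟨C'', hC'', hc''⟩ := h''
  let f : (Fin m → Q ⧸ Q') × (Fin m → Q') → (Fin m → Q) := fun a i => (a.1 i).out + (a.2 i : Q)
  have hf : ∀ a i, Submodule.Quotient.mk (p := Q') (f a i) = a.1 i := by
    intro a i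
    simp only [f, Submodule.Quotient.mk_add]
    have h1 : Submodule.Quotient.mk (p := Q') (a.1 i).out = a.1 i := Quotient.out_eq _
    have h2 : Submodule.Quotient.mk (p := Q') (a.2 i : Q) = 0 := by
      rw [Submodule.Quotient.mk_eq_zero]; exact (a.2 i).2
    rw [h1, h2, add_zero]
  have hinj : Function.Injective f := by
    rintro ⟨a, b⟩ ⟨a', b'⟩ h
    have h1 : a = a' := by
      funext i
      have e1 := hf (a, b) i
      have e2 := hf (a', b') i
      rw [h] at e1
      exact e1.symm.trans e2
    subst h1
    have : b = b' := by
      funext i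
      have := congrFun h i
      simp only [f, add_right_inj] at this
      exact Subtype.ext this
    rw [this]
  refine ⟨(C'' ×ˢ C').image f, ?_, ?_⟩
  · intro x hx y hy z hz h
    simp only [mem_image, mem_product] at hx hy hz
    obtain ⟨⟨x1, x2⟩, ⟨hx1, hx2⟩, rfl⟩ := hx
    obtain ⟨⟨y1, y2⟩, ⟨hy1, hy2⟩, rfl⟩ := hy
    obtain ⟨⟨z1, z2⟩, ⟨hz1, hz2⟩, rfl⟩ := hz
    simp only at hx1 hx2 hy1 hy2 hz1 hz2
    obtain ⟨rfl, rfl⟩ := hC'' x1 hx1 y1 hy1 z1 hz1 (by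
      funext i
      have := congrArg (Submodule.Quotient.mk (p := Q')) (congrFun h i)
      simp only [Pi.smul_apply, Pi.sub_apply, Submodule.Quotient.mk_smul, Submodule.Quotient.mk_sub, hf] at this
      simpa using this)
    obtain ⟨rfl, rfl⟩ := hC' x2 hx2 y2 hy2 z2 hz2 (by
      funext i
      have := congrFun h i
      simp only [Pi.smul_apply, Pi.sub_apply, f, add_sub_add_left_eq_sub] at this
      apply Subtype.ext
      simpa using this)
    exact ⟨rfl, rfl⟩
  · rw [card_image_of_injective _ hinj, card_product, mul_pow]
    rw [Submodule.card_eq_card_quotient_mul_card Q', mul_pow]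
    first
      | exact Nat.mul_le_mul hc'' hc'
      | (rw [mul_comm]; exact Nat.mul_le_mul hc'' hc')

lemma cw_field_mod (F : Type) [Field F] [Finite F] (t : F) (h0 : t ≠ 0) (h1 : t ≠ 1) :
    ∃ m r : ℕ, 1 ≤ m ∧ 1 ≤ r ∧ CWMod (1 : F) t m r F := by
  have := Fintype.ofFinite F
  obtain ⟨m, hm, C, hC, hc⟩ := cw_field_cap F t h0 h1
  rw [← Nat.card_eq_fintype_card] at hc
  set q := Nat.card F
  have hq : 0 < q := Nat.card_pos
  have hlt : (1:ℝ) < (C.card^3 : ℝ) / (q:ℝ)^(2*m) := by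
    rw [one_lt_div (by positivity)]
    exact_mod_cast hc
  obtain ⟨r, hr⟩ := pow_unbounded_of_one_lt (q:ℝ) hlt
  have hr' : (q:ℝ) < ((C.card^3 : ℝ) / (q:ℝ)^(2*m))^(r+1) :=
    hr.trans (pow_lt_pow_right₀ hlt (Nat.lt_succ_self r))
  refine ⟨m, r+1, hm, by omega, C, hC, ?_⟩
  rw [div_pow, lt_div_iff₀ (by positivity)] at hr'
  have h2 : q * (q^(2*m))^(r+1) < (C.card^3)^(r+1) := by exact_mod_cast hr'
  calc _ = q * (q^(2*m))^(r+1) := by ring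
    _ ≤ _ := h2.le
    _ = _ := by ring

open Polynomial in
lemma cw_finite_quot (J : Ideal ℤ[X]) (ℓ : ℤ) (hℓ : ℓ ≠ 0) (g : ℤ[X]) (hg : g.Monic)
    (h1 : C ℓ ∈ J) (h2 : g ∈ J) : Finite (ℤ[X] ⧸ J) := by
  have := hg.finite_quotient
  have hle : Ideal.span {g} ≤ J := by rw [Ideal.span_le]; simpa using h2
  have : Module.Finite ℤ (ℤ[X] ⧸ J) := by
    refine Module.Finite.of_surjective (R := ℤ) (M := ℤ[X] ⧸ Ideal.span {g}) 
      ((Ideal.Quotient.factor hle).toAddMonoidHom.toIntLinearMap) ?_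
    exact Ideal.Quotient.factor_surjective hle
  apply Module.finite_of_fg_torsion
  intro x
  refine ⟨⟨ℓ, mem_nonZeroDivisors_of_ne_zero hℓ⟩, ?_⟩
  obtain ⟨f, rfl⟩ := Ideal.Quotient.mk_surjective x
  change ℓ • (Ideal.Quotient.mk J f) = 0
  rw [← map_zsmul, Ideal.Quotient.eq_zero_iff_mem, zsmul_eq_mul]
  exact J.mul_mem_right f (by simpa using h1)

open Polynomial in
lemma cw_int_mem (m : Ideal ℤ[X]) (hm : m ≠ ⊤) (ℓ : ℕ) (hℓ : ℓ.Prime) (h1 : C (ℓ:ℤ) ∈ m) (a : ℤ)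
    (ha : C a ∈ m) : (ℓ : ℤ) ∣ a := by
  by_contra h
  have hc : IsCoprime (ℓ : ℤ) a := ((Nat.prime_iff_prime_int.1 hℓ).coprime_iff_not_dvd).2 h
  obtain ⟨u, v, huv⟩ := hc
  apply hm
  rw [Ideal.eq_top_iff_one]
  have : (1 : ℤ[X]) = C u * C (ℓ:ℤ) + C v * C a := by
    rw [← C_mul, ← C_mul, ← C_add, huv, C_1]
  rw [this]
  exact m.add_mem (m.mul_mem_left _ h1) (m.mul_mem_left _ ha)

open Polynomial in
lemma cw_simple_mod (m : Ideal ℤ[X]) [hm : m.IsMaximal] [Finite (ℤ[X] ⧸ m)] (N : ℤ)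
    (hN : C N ∉ m) (hX : X ∉ m) (hXN : X - C N ∉ m) :
    ∃ k r : ℕ, 1 ≤ k ∧ 1 ≤ r ∧ CWMod (C N) (X : ℤ[X]) k r (ℤ[X] ⧸ m) := by
  let _ := Ideal.Quotient.field m
  have hN' : Ideal.Quotient.mk m (C N) ≠ 0 := by rwa [Ne, Ideal.Quotient.eq_zero_iff_mem]
  have hX' : Ideal.Quotient.mk m X ≠ 0 := by rwa [Ne, Ideal.Quotient.eq_zero_iff_mem]
  obtain ⟨k, r, hk, hr, D, hD, hd⟩ := cw_field_mod (ℤ[X] ⧸ m) (Ideal.Quotient.mk m X / Ideal.Quotient.mk m (C N))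
    (div_ne_zero hX' hN') (by
      rw [Ne, div_eq_one_iff_eq hN', ← sub_eq_zero, ← map_sub, Ideal.Quotient.eq_zero_iff_mem]
      exact hXN)
  refine ⟨k, r, hk, hr, D, ?_, hd⟩
  intro x hx y hy z hz h
  apply hD x hx y hy z hz
  funext i
  have := congrFun h i
  simp only [Pi.smul_apply, Pi.sub_apply, Algebra.smul_def, Ideal.Quotient.algebraMap_eq] at this
  simp only [Pi.smul_apply, Pi.sub_apply, smul_eq_mul, one_mul]
  rw [div_mul_eq_mul_div, eq_div_iff hN', ← this, mul_comm]

open Polynomial in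
lemma cw_module_cap (ℓ : ℕ) (hℓ : ℓ.Prime) (g : ℤ[X]) (hg : g.Monic) (N : ℤ)
    (hN : ¬ (ℓ:ℤ) ∣ N) (hg0 : ¬ (ℓ:ℤ) ∣ g.eval 0) (hgN : ¬ (ℓ:ℤ) ∣ g.eval N) :
    ∃ k r : ℕ, 1 ≤ k ∧ 1 ≤ r ∧ ∀ (Q : Type) [AddCommGroup Q] [Module ℤ[X] Q] [Finite Q] (n : ℕ),
      (∀ x : Q, (C (ℓ:ℤ))^n • x = 0) → (∀ x : Q, g^n • x = 0) → CWMod (C N) (X : ℤ[X]) k r Q := by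
  classical
  have hℓ0 : (ℓ:ℤ) ≠ 0 := by exact_mod_cast hℓ.ne_zero
  let J : Ideal ℤ[X] := Ideal.span {C (ℓ:ℤ), g}
  have hJ1 : C (ℓ:ℤ) ∈ J := Ideal.subset_span (by simp)
  have hJ2 : g ∈ J := Ideal.subset_span (by simp)
  have hfin : Finite (ℤ[X] ⧸ J) := cw_finite_quot J ℓ hℓ0 g hg hJ1 hJ2
  have hfinI : Finite (Ideal (ℤ[X] ⧸ J)) := Finite.of_injective (fun I => (I : Set (ℤ[X] ⧸ J))) SetLike.coe_injective
  have hset : {I : Ideal ℤ[X] | J ≤ I}.Finite := by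
    apply (Set.finite_range (fun I : Ideal (ℤ[X] ⧸ J) => I.comap (Ideal.Quotient.mk J))).subset
    intro I hI
    refine ⟨I.map (Ideal.Quotient.mk J), ?_⟩
    simp only
    rw [Ideal.comap_map_of_surjective _ Ideal.Quotient.mk_surjective, ← RingHom.ker_eq_comap_bot, Ideal.mk_ker]
    exact sup_eq_left.2 hI
  have hex : ∀ I : Ideal ℤ[X], ∃ kr : ℕ × ℕ, 1 ≤ kr.1 ∧ 1 ≤ kr.2 ∧ (J ≤ I → I.IsMaximal → 
      CWMod (C N) (X : ℤ[X]) kr.1 kr.2 (ℤ[X] ⧸ I)) := by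
    intro I
    by_cases h : J ≤ I ∧ I.IsMaximal
    · have := h.2
      have hfin2 : Finite (ℤ[X] ⧸ I) := cw_finite_quot I ℓ hℓ0 g hg (h.1 hJ1) (h.1 hJ2)
      have hev : ∀ a : ℤ, X - C a ∈ I → C (g.eval a) ∈ I := by
        intro a ha
        have h1 := I.mem_of_dvd (X_sub_C_dvd_sub_C_eval (a := a) (p := g)) ha
        have := I.sub_mem (h.1 hJ2) h1
        simpa using this
      obtain ⟨k, r, hk, hr, hc⟩ := cw_simple_mod I N 
        (fun h' => hN (cw_int_mem I h.2.ne_top ℓ hℓ (h.1 hJ1) _ h'))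
        (fun h' => hg0 (cw_int_mem I h.2.ne_top ℓ hℓ (h.1 hJ1) _ (hev 0 (by simpa using h'))))
        (fun h' => hgN (cw_int_mem I h.2.ne_top ℓ hℓ (h.1 hJ1) _ (hev N h')))
      exact ⟨(k, r), hk, hr, fun _ _ => hc⟩
    · exact ⟨(1, 1), le_rfl, le_rfl, fun h1 h2 => absurd ⟨h1, h2⟩ h⟩
  choose kr hk hr hmod using hex
  let K := ∏ I ∈ hset.toFinset, (kr I).1
  let Rr := ∑ I ∈ hset.toFinset, (kr I).2 + 1
  refine ⟨K, Rr, Nat.one_le_iff_ne_zero.2 (prod_ne_zero_iff.2 fun I _ => by have := hk I; omega), by omega, ?_⟩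
  suffices H : ∀ (c : ℕ) (Q : Type) [AddCommGroup Q] [Module ℤ[X] Q] [Finite Q] (n : ℕ), Nat.card Q = c →
      (∀ x : Q, (C (ℓ:ℤ))^n • x = 0) → (∀ x : Q, g^n • x = 0) → CWMod (C N) (X : ℤ[X]) K Rr Q by
    intro Q _ _ _ n
    exact H _ Q n rfl
  intro c
  induction c using Nat.strong_induction_on with
  | _ c ih =>
  intro Q _ _ _ n hc h1 h2
  rcases subsingleton_or_nontrivial Q with hs | hs
  · refine ⟨{0}, ?_, ?_⟩
    · intro x hx y hy z hz _
      exact ⟨Subsingleton.elim _ _, Subsingleton.elim _ _⟩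
    · simp
  · have : Finite (Submodule ℤ[X] Q) := Finite.of_injective (fun I => (I : Set Q)) SetLike.coe_injective
    obtain ⟨Q', hQ', -⟩ := (eq_bot_or_exists_atom_le (⊤ : Submodule ℤ[X] Q)).resolve_left top_ne_bot
    have hsim : IsSimpleModule ℤ[X] Q' := isSimpleModule_iff_isAtom.2 hQ'
    obtain ⟨I, hI, ⟨e⟩⟩ := isSimpleModule_iff_quot_maximal.1 hsim
    have hkill : ∀ f : ℤ[X], (∀ x : Q, f^n • x = 0) → f ∈ I := by
      intro f hf
      apply hI.isPrime.mem_of_pow_mem n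
      rw [← Ideal.Quotient.eq_zero_iff_mem]
      have : f^n • e (e.symm 1) = 0 := by
        rw [← map_smul]
        have : f^n • (e.symm 1 : Q') = 0 := by
          apply Subtype.ext
          simpa using hf (e.symm 1 : Q')
        rw [this, map_zero]
      rw [e.apply_symm_apply] at this
      have h9 : (f^n • (1 : ℤ[X] ⧸ I)) = Ideal.Quotient.mk I (f^n) := by
        change Ideal.Quotient.mk I (f^n * 1) = _
        rw [mul_one]
      exact h9.symm.trans this
    have hJI : J ≤ I := by
      rw [Ideal.span_le]
      rintro f (rfl | rfl)
      · exact hkill _ h1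
      · exact hkill _ h2
    have hIfin : Finite (ℤ[X] ⧸ I) := Finite.of_equiv _ e.toEquiv
    have hImem : I ∈ hset.toFinset := by simpa using hJI
    have hmodI := hmod I hJI hI
    have hmod1 : CWMod (C N) (X : ℤ[X]) K Rr Q' := by
      refine CWMod.equiv ?_ e.symm
      have hr' : (kr I).2 ≤ Rr := by
        have := single_le_sum (f := fun I => (kr I).2) (fun _ _ => Nat.zero_le _) hImem
        simp only [Rr]; omega
      have h3 := hmodI.mono_r (hr I) hr'
      obtain ⟨d, hd⟩ := dvd_prod_of_mem (fun I => (kr I).1) hImem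
      have hd' : K = d * (kr I).1 := by simp only [K]; rw [hd, mul_comm]
      have hd1 : 1 ≤ d := by
        rw [Nat.one_le_iff_ne_zero]
        rintro rfl
        have : K ≠ 0 := prod_ne_zero_iff.2 fun I _ => by have := hk I; omega
        omega
      rw [hd']
      exact h3.mul hd1
    refine CWMod.ext Q' hmod1 ?_
    have hcard := Submodule.card_eq_card_quotient_mul_card Q'
    have hQ'1 : 1 < Nat.card Q' := by
      have := hsim.nontrivial
      exact Finite.one_lt_card
    have hQfin : Finite (Q ⧸ Q') := Finite.of_surjective _ (Submodule.Quotient.mk_surjective Q')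
    have hQpos : 0 < Nat.card (Q ⧸ Q') := Nat.card_pos
    refine ih (Nat.card (Q ⧸ Q')) (by rw [← hc]; nlinarith) (Q ⧸ Q') n rfl ?_ ?_
    · intro x
      obtain ⟨x, rfl⟩ := Submodule.Quotient.mk_surjective _ x
      rw [← Submodule.Quotient.mk_smul, h1]; simp
    · intro x
      obtain ⟨x, rfl⟩ := Submodule.Quotient.mk_surjective _ x
      rw [← Submodule.Quotient.mk_smul, h2]; simp

lemma cw_char_re (p : ℕ) [NeZero p] (a : ZMod p) (h : ∃ r : ℤ, 6 * |r| ≤ p ∧ (r : ZMod p) = a) :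
    (1/2 : ℝ) ≤ (ZMod.stdAddChar a : ℂ).re := by
  obtain ⟨r, hr, rfl⟩ := h
  rw [ZMod.stdAddChar_coe]
  have hp : (0:ℝ) < p := by exact_mod_cast Nat.pos_of_ne_zero (NeZero.ne p)
  have e : (2 * Real.pi * Complex.I * r / p : ℂ) = ((2 * Real.pi * r / p : ℝ) : ℂ) * Complex.I := by
    push_cast; ring
  rw [e, Complex.exp_ofReal_mul_I_re, ← Real.cos_abs]
  have hb : |2 * Real.pi * r / p| ≤ Real.pi / 3 := by
    rw [abs_div, abs_mul, abs_of_pos (by positivity : 0 < 2 * Real.pi), abs_of_pos hp, div_le_iff₀ hp]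
    have : (6 * |(r:ℝ)|) ≤ p := by exact_mod_cast hr
    nlinarith [Real.pi_pos]
  calc (1/2 : ℝ) = Real.cos (Real.pi/3) := by rw [Real.cos_pi_div_three]
    _ ≤ _ := Real.cos_le_cos_of_nonneg_of_le_pi (abs_nonneg _) (by linarith [Real.pi_pos]) hb

lemma cw_fourier (F : Type) [Field F] [Fintype F] (p : ℕ) [NeZero p] (χ : F →+ ZMod p) (hχ : χ ≠ 0)
    {ι : Type} [Fintype ι] (e : ι → F) (he : Function.Injective e) (T : Finset F)
    (hT : ∀ v ∈ T, ∀ i, ∃ r : ℤ, 6 * |r| ≤ p ∧ (r : ZMod p) = χ (e i * v)) :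
    T.card * Fintype.card ι ≤ 4 * Fintype.card F := by
  classical
  let ψ : AddChar F ℂ := (ZMod.stdAddChar (N := p)).compAddMonoidHom χ
  have hψ : ψ ≠ 1 := by
    intro h
    apply hχ
    ext x
    have : ψ x = 1 := by rw [h]; rfl
    have h2 : ZMod.stdAddChar (χ x) = ZMod.stdAddChar (N := p) 0 := by
      rw [AddChar.map_zero_eq_one]; exact this
    exact ZMod.injective_stdAddChar h2
  have hprim : ψ.IsPrimitive := AddChar.IsPrimitive.of_ne_one hψ
  let f : F → ℂ := fun w => ∑ v ∈ T, ψ (w * v)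
  have hpars : ∑ w, (‖f w‖^2 : ℝ) = Fintype.card F * T.card := by
    have : ((∑ w, (‖f w‖^2 : ℝ) : ℝ) : ℂ) = Fintype.card F * T.card := by
      push_cast
      have e1 : ∀ w, ((‖f w‖ : ℂ))^2 = ∑ v ∈ T, ∑ v' ∈ T, ψ (w * (v - v')) := by
        intro w
        rw [← Complex.mul_conj']
        simp only [f, map_sum]
        rw [sum_mul_sum]
        refine sum_congr rfl fun v _ => sum_congr rfl fun v' _ => ?_
        rw [← AddChar.map_neg_eq_conj, ← AddChar.map_add_eq_mul]
        congr 1; ring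
      simp_rw [e1]
      rw [sum_comm]
      have e2 : ∀ v ∈ T, ∑ w, ∑ v' ∈ T, ψ (w * (v - v')) = Fintype.card F := by
        intro v hv
        rw [sum_comm]
        simp_rw [AddChar.sum_mulShift _ hprim, sub_eq_zero]
        simp [hv]
      rw [sum_congr rfl e2]
      simp [mul_comm]
    exact_mod_cast this
  have hlow : ∀ i, (T.card : ℝ)/2 ≤ ‖f (e i)‖ := by
    intro i
    refine le_trans ?_ (Complex.re_le_norm _)
    simp only [f, Complex.re_sum]
    have : ∑ v ∈ T, (1/2 : ℝ) ≤ ∑ v ∈ T, (ψ (e i * v)).re := by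
      apply sum_le_sum
      intro v hv
      exact cw_char_re p _ (hT v hv i)
    simp only [sum_const, nsmul_eq_mul] at this
    linarith
  have hsum : (Fintype.card ι : ℝ) * ((T.card : ℝ)/2)^2 ≤ Fintype.card F * T.card := by
    rw [← hpars]
    calc (Fintype.card ι : ℝ) * ((T.card : ℝ)/2)^2 = ∑ i : ι, ((T.card : ℝ)/2)^2 := by simp
      _ ≤ ∑ i : ι, ‖f (e i)‖^2 := by
        apply sum_le_sum
        intro i _
        have := hlow i
        gcongr
      _ = ∑ w ∈ univ.map ⟨e, he⟩, ‖f w‖^2 := by rw [sum_map]; rfl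
      _ ≤ _ := sum_le_sum_of_subset_of_nonneg (subset_univ _) (fun _ _ _ => by positivity)
  rcases Nat.eq_zero_or_pos T.card with h0 | h0
  · simp [h0]
  · have h0' : (0:ℝ) < T.card := by exact_mod_cast h0
    have : (T.card : ℝ) * Fintype.card ι ≤ 4 * Fintype.card F := by
      by_contra hlt
      push Not at hlt
      nlinarith
    exact_mod_cast this

lemma cw_pigeon (F : Type) [AddCommGroup F] [Fintype F] (p : ℕ) [NeZero p] {ι : Type} [Fintype ι]
    (h : ι → F →+ ZMod p) (H : ι → ℕ) (hH : ∀ i, 1 ≤ H i) (B : Finset F)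
    (hB : ∀ u, (∀ i, ∃ r : ℤ, |r| * H i < p ∧ (r : ZMod p) = h i u) → u ∈ B) :
    Fintype.card F ≤ B.card * ∏ i, H i := by
  classical
  have hp : 0 < p := Nat.pos_of_ne_zero (NeZero.ne p)
  let b : F → (∀ i, Fin (H i)) := fun u i => ⟨(h i u).val * H i / p, by
    rw [Nat.div_lt_iff_lt_mul hp, mul_comm]
    exact Nat.mul_lt_mul_of_pos_left (ZMod.val_lt _) (hH i)⟩
  have hcard : ∀ β ∈ (univ : Finset (∀ i, Fin (H i))), (univ.filter (fun u => b u = β)).card ≤ B.card := by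
    intro β _
    rcases (univ.filter (fun u => b u = β)).eq_empty_or_nonempty with h0 | ⟨u0, hu0⟩
    · simp [h0]
    · apply card_le_card_of_injOn (fun u => u - u0)
      · intro u hu
        simp only [coe_filter, mem_univ, true_and, Set.mem_ofPred_eq, mem_filter] at hu hu0
        apply hB
        intro i
        have hi : (h i u).val * H i / p = (h i u0).val * H i / p := by
          have := congrFun (hu.trans hu0.symm) i
          simpa [b] using this
        refine ⟨(h i u).val - (h i u0).val, ?_, by simp⟩
        have e1 := Nat.div_add_mod ((h i u).val * H i) p
        have e2 := Nat.div_add_mod ((h i u0).val * H i) p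
        have l1 := Nat.mod_lt ((h i u).val * H i) hp
        have l2 := Nat.mod_lt ((h i u0).val * H i) hp
        rw [hi] at e1
        have : |((h i u).val - (h i u0).val : ℤ)| * H i = |((h i u).val * H i : ℤ) - (h i u0).val * H i| := by
          rw [← sub_mul, abs_mul, abs_of_nonneg (by positivity : (0:ℤ) ≤ H i)]
        rw [this, abs_lt]
        have e3 : (p:ℤ) * ((h i u0).val * H i / p : ℕ) + ((h i u).val * H i % p : ℕ) = (h i u).val * H i := by
          exact_mod_cast e1
        have e4 : (p:ℤ) * ((h i u0).val * H i / p : ℕ) + ((h i u0).val * H i % p : ℕ) = (h i u0).val * H i := by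
          exact_mod_cast e2
        rw [← e3, ← e4]
        generalize ((h i u).val * H i % p) = c1 at *
        generalize ((h i u0).val * H i % p) = c2 at *
        constructor <;> omega
      · intro x _ y _ hxy
        exact sub_left_injective hxy
  have := card_le_mul_card_image_of_maps_to (s := (univ : Finset F)) (t := univ) (f := b) (by simp) _ hcard
  simpa [card_univ, Fintype.card_pi] using this

open Polynomial in
lemma cw_round_data (F : Type) [Field F] [Fintype F] (t : F) (N : ℤ)
    (Q : Type) [AddCommGroup Q] [Module ℤ[X] Q] [Finite Q] (B : Finset F) (lam : F → Q) (κ K : ℕ)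
    (hK : 1 ≤ K) (m : ℕ) (C0 : Finset (Fin m → Q)) (hC0 : CWCap (C N) (X : ℤ[X]) C0)
    (h1 : ∀ x ∈ B, ∀ y ∈ B, ∀ z ∈ B, x - y = t * (z - y) →
      (C N : ℤ[X]) • (lam x - lam y) = (X : ℤ[X]) • (lam z - lam y))
    (h2 : ∀ y ∈ B, ∀ T : Finset F, (∀ z ∈ T, z ∈ B ∧ lam z = lam y) → T.card * Nat.card Q ≤ κ * Fintype.card F)
    (h3 : Fintype.card F ≤ B.card * K) :
    CWData F t ((C0.card : ℝ) / ((K : ℝ) * Nat.card Q)^m) (((κ:ℝ) / Nat.card Q)^m) := by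
  classical
  have := Fintype.ofFinite Q
  rw [Nat.card_eq_fintype_card]
  rw [Nat.card_eq_fintype_card] at h2
  set q := Fintype.card Q with hq
  have hqpos : 0 < q := Fintype.card_pos_iff.2 ⟨0⟩
  have hqR : (0:ℝ) < q := by exact_mod_cast hqpos
  have hKR : (0:ℝ) < K := by exact_mod_cast hK
  let Bm : Finset (Fin m → F) := Fintype.piFinset (fun _ => B)
  let S : (Fin m → Q) → Finset (Fin m → F) := fun k => Bm.filter (fun x => (fun i => lam (x i)) + k ∈ C0)
  have hsum : ∑ k : Fin m → Q, (S k).card = B.card^m * C0.card := by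
    simp only [S, card_filter]
    rw [sum_comm]
    have : ∀ x ∈ Bm, ∑ k : Fin m → Q, (if (fun i => lam (x i)) + k ∈ C0 then 1 else 0) = C0.card := by
      intro x _
      have := Equiv.sum_comp (Equiv.addLeft (fun i => lam (x i))) (fun k => if k ∈ C0 then 1 else 0)
      simp only [Equiv.coe_addLeft] at this
      refine Eq.trans ?_ (this.trans (by simp))
      congr
    rw [sum_congr rfl this]
    simp [Bm]
  obtain ⟨k, -, hk⟩ := Finset.exists_le_of_sum_le (s := (univ : Finset (Fin m → Q))) 
    (f := fun _ => (B.card^m * C0.card : ℝ) / (q:ℝ)^m) (g := fun k => ((S k).card : ℝ)) ⟨0, mem_univ _⟩ (by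
      have h' : ∑ k : Fin m → Q, ((S k).card : ℝ) = B.card^m * C0.card := by exact_mod_cast hsum
      rw [h']
      simp only [sum_const, card_univ, Fintype.card_pi, prod_const, Fintype.card_fin, nsmul_eq_mul, ← hq]
      push_cast
      apply le_of_eq
      field_simp)
  refine ⟨Fin m → F, inferInstance, inferInstance, inferInstance, S k, ?_, ?_⟩
  · refine le_trans ?_ hk
    simp only [Fintype.card_pi, prod_const, card_univ, Fintype.card_fin]
    push_cast
    have h3' : (Fintype.card F : ℝ) ≤ B.card * K := by exact_mod_cast h3
    calc (C0.card : ℝ) / ((K : ℝ) * q)^m * (Fintype.card F : ℝ)^m ≤ (C0.card : ℝ) / ((K : ℝ) * q)^m * (B.card * K : ℝ)^m := by gcongr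
      _ = _ := by rw [mul_pow, mul_pow]; field_simp
  · have hsol : (cwSol t (S k) : ℝ) ≤ ∑ y ∈ S k, (∏ i, ((B.filter (fun z => lam z = lam (y i))).card : ℝ)) := by
      have : cwSol t (S k) ≤ ∑ y ∈ S k, (∏ i, (B.filter (fun z => lam z = lam (y i))).card) := by
        simp_rw [← Fintype.card_piFinset, ← card_sigma]
        unfold cwSol
        apply card_le_card_of_injOn (fun p => (⟨p.1, p.2⟩ : Σ _ : (Fin m → F), (Fin m → F)))
        · rintro ⟨y, z⟩ hp
          simp only [coe_filter, mem_product, Set.mem_ofPred_eq] at hp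
          simp only [coe_sigma, Set.mem_sigma_iff, mem_coe, Fintype.mem_piFinset, mem_filter]
          obtain ⟨⟨hy, hz⟩, hx⟩ := hp
          refine ⟨hy, ?_⟩
          simp only [S, Bm, mem_filter, Fintype.mem_piFinset] at hy hz hx
          have := hC0 _ hx.2 _ hy.2 _ hz.2 (by
            funext i
            simp only [Pi.smul_apply, Pi.sub_apply, Pi.add_apply, add_sub_add_right_eq_sub]
            refine h1 _ (hx.1 i) _ (hy.1 i) _ (hz.1 i) ?_
            simp)
          intro i
          refine ⟨hz.1 i, ?_⟩
          have h' := congrFun this.2 i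
          simpa using h'
        · rintro ⟨y, z⟩ _ ⟨y', z'⟩ _ h
          simpa using h
      exact_mod_cast this
    refine hsol.trans ?_
    have hb : ∀ y ∈ S k, (∏ i, ((B.filter (fun z => lam z = lam (y i))).card : ℝ)) ≤ ((κ:ℝ) / q * Fintype.card F)^m := by
      intro y hy
      have hy' : ∀ i, y i ∈ B := by
        simp only [S, Bm, mem_filter, Fintype.mem_piFinset] at hy
        exact hy.1
      calc _ ≤ ∏ i : Fin m, ((κ:ℝ) / q * Fintype.card F) := by
            apply prod_le_prod
            · intros; positivity
            · intro i _
              have := h2 (y i) (hy' i) (B.filter (fun z => lam z = lam (y i))) (by simp)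
              have h' : ((B.filter (fun z => lam z = lam (y i))).card : ℝ) * q ≤ κ * Fintype.card F := by exact_mod_cast this
              rw [div_mul_eq_mul_div, le_div_iff₀ hqR]
              exact h'
        _ = _ := by simp
    refine (sum_le_sum hb).trans (le_of_eq ?_)
    simp only [sum_const, nsmul_eq_mul, Fintype.card_pi, prod_const, card_univ, Fintype.card_fin]
    push_cast
    rw [mul_pow]; ring

lemma cw_numeric (q c m r κ K : ℕ) (hq : 1 ≤ q) (hκ : 1 ≤ κ) (hK : 1 ≤ K)
    (h : q ^ (2 * m * r + 1) ≤ c ^ (3 * r)) (hlt : (κ * K^3)^(m * r) < q) :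
    0 < (c : ℝ) / ((K : ℝ) * q)^m ∧ 0 < ((κ:ℝ) / q)^m ∧ ((κ:ℝ) / q)^m < ((c : ℝ) / ((K : ℝ) * q)^m)^3 := by
  have hqR : (0:ℝ) < q := by exact_mod_cast hq
  have hKR : (0:ℝ) < K := by exact_mod_cast hK
  have hκR : (0:ℝ) < κ := by exact_mod_cast hκ
  have hmain : κ^m * (K^3)^m * q^(2*m) < c^3 := by
    apply lt_of_pow_lt_pow_left₀ r (by positivity)
    calc (κ^m * (K^3)^m * q^(2*m))^r = (κ * K^3)^(m*r) * q^(2*m*r) := by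
          rw [← mul_pow, mul_pow, ← pow_mul, ← pow_mul]
      _ < q * q^(2*m*r) := by gcongr
      _ = q^(2*m*r+1) := by ring
      _ ≤ c^(3*r) := h
      _ = _ := by rw [pow_mul]
  have hc : 0 < c := by
    rcases Nat.eq_zero_or_pos c with rfl | h
    · simp at hmain
    · exact h
  have hcR : (0:ℝ) < c := by exact_mod_cast hc
  refine ⟨by positivity, by positivity, ?_⟩
  have hm : (κ:ℝ)^m * ((K:ℝ)^3)^m * (q:ℝ)^(2*m) < (c:ℝ)^3 := by exact_mod_cast hmain
  rw [div_pow, div_pow, div_lt_div_iff₀ (by positivity) (by positivity)]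
  calc (κ:ℝ)^m * (((K:ℝ) * q)^m)^3 = (κ:ℝ)^m * ((K:ℝ)^3)^m * (q:ℝ)^(2*m) * q^m := by
        rw [mul_pow, mul_pow, ← pow_mul, ← pow_mul, ← pow_mul]; ring
    _ < _ := by gcongr

/-- companion operator -/
def cwT (D : ℕ) (g : ℕ → ℤ) (M : ℕ) : (Fin D → ZMod M) →ₗ[ℤ] (Fin D → ZMod M) where
  toFun l i := if h : i.1 + 1 < D then l ⟨i.1 + 1, h⟩ else - ∑ j : Fin D, (g j : ZMod M) * l j
  map_add' l l' := by
    funext i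
    by_cases h : i.1 + 1 < D
    · simp [h]
    · simp [h, mul_add, sum_add_distrib]; ring
  map_smul' a l := by
    funext i
    by_cases h : i.1 + 1 < D
    · simp [h]
    · simp [h, mul_sum]
      refine sum_congr rfl fun j _ => by ring

lemma cwT_pow (D : ℕ) (g : ℕ → ℤ) (M : ℕ) (k : ℕ) : ∀ (l : Fin D → ZMod M) (j : ℕ) (h : j + k < D),
    ((cwT D g M)^k) l ⟨j, by omega⟩ = l ⟨j + k, h⟩ := by
  induction k with
  | zero => intro l j h; simp
  | succ k ih =>
    intro l j h
    rw [pow_succ', Module.End.mul_apply]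
    have h' : j + 1 < D := by omega
    simp only [cwT, LinearMap.coe_mk, AddHom.coe_mk, h', dite_true]
    have := ih l (j+1) (by omega)
    simp only [cwT] at this
    rw [this]
    congr 2
    omega

open Polynomial in
lemma cwT_aeval (G : ℤ[X]) (hG : G.Monic) (hD : 1 ≤ G.natDegree) (M : ℕ) :
    aeval (cwT G.natDegree G.coeff M) G = 0 := by
  set D := G.natDegree with hDd
  set T := cwT D G.coeff M with hT
  have h0 : ∀ l, (aeval T G l) ⟨0, hD⟩ = 0 := by
    intro l
    have e : aeval T G = T^D + ∑ i ∈ range D, (G.coeff i) • T^i := by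
      conv_lhs => rw [hG.as_sum]
      simp [← hDd, Algebra.smul_def]
    have e2 : ((T^D) l) ⟨0, hD⟩ = - ∑ j : Fin D, (G.coeff j : ZMod M) * l j := by
      obtain ⟨d, hd⟩ : ∃ d, D = d + 1 := ⟨D - 1, by omega⟩
      have hgen : ∀ e, e = d + 1 → T^e = T^d * T := by
        rintro _ rfl
        exact pow_succ T d
      have : T^D = T^d * T := hgen D hd
      rw [this, Module.End.mul_apply, cwT_pow D G.coeff M d (T l) 0 (by omega)]
      rw [hT]
      simp only [cwT, LinearMap.coe_mk, AddHom.coe_mk]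
      rw [dif_neg (by omega)]
    rw [e]
    simp only [LinearMap.add_apply, LinearMap.sum_apply, LinearMap.smul_apply, Pi.add_apply, e2, Finset.sum_apply, Pi.smul_apply]
    rw [← Fin.sum_univ_eq_sum_range (fun i => G.coeff i • ((T^i) l) ⟨0, hD⟩) D]
    have : ∀ i : Fin D, G.coeff i • ((T^(i:ℕ)) l) ⟨0, hD⟩ = (G.coeff i : ZMod M) * l i := by
      intro i
      rw [cwT_pow D G.coeff M i l 0 (by simp), zsmul_eq_mul]
      simp
    simp [this]
  refine LinearMap.ext fun l => ?_
  funext i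
  have e1 := cwT_pow D G.coeff M i (aeval T G l) 0 (by simp)
  have e2 : (T^(i:ℕ)) (aeval T G l) = aeval T G ((T^(i:ℕ)) l) := by
    have hc : Commute (T^(i:ℕ)) (aeval T G) := by
      have : T^(i:ℕ) = aeval T (X^(i:ℕ) : ℤ[X]) := by simp
      rw [this]
      exact (Commute.all (X^(i:ℕ) : ℤ[X]) G).map (aeval T)
    rw [← Module.End.mul_apply, hc.eq, Module.End.mul_apply]
  rw [← hT, e2, h0] at e1
  simpa using e1.symm

lemma cw_round_choice (F : Type) [Field F] (p : ℕ) [NeZero p] (χ : F →+ ZMod p) (s : F) (N : ℤ)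
    (g : ℕ → ℤ) (D M R R' : ℕ) (u ρ : F) (hρ : ρ = s^D * u + ∑ j ∈ range D, (g j : F) * (s^j * u))
    (hc1 : (2 * |N| + 2) * R < p)
    (hc2 : (2 * |N| + 2) * (M * R' + (∑ j ∈ range D, |g j|) * R) < p)
    (h1 : ∀ i < D, ∃ r : ℤ, |r| ≤ R ∧ (r : ZMod p) = M * χ (s^i * u))
    (h2 : ∃ r : ℤ, |r| ≤ R' ∧ (r : ZMod p) = χ ρ) :
    ∃ th r la : ℕ → ℤ, (∀ i ≤ D, (th i : ZMod p) = χ (s^i * u)) ∧ (∀ i ≤ D, M * th i - r i = p * la i) ∧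
      (∀ i ≤ D, (2 * |N| + 2) * |r i| < p) ∧ la D = - ∑ j ∈ range D, g j * la j ∧ ∀ i < D, |r i| ≤ R := by
  have hr : ∀ i, ∃ r : ℤ, i < D → (|r| ≤ R ∧ (r : ZMod p) = M * χ (s^i * u)) := by
    intro i
    by_cases h : i < D
    · obtain ⟨r, hr⟩ := h1 i h; exact ⟨r, fun _ => hr⟩
    · exact ⟨0, fun h' => absurd h' h⟩
  choose r hr using hr
  obtain ⟨ρ', hρ1, hρ2⟩ := h2
  let th : ℕ → ℤ := fun i => (χ (s^i * u)).val
  have hth : ∀ i, (th i : ZMod p) = χ (s^i * u) := by intro i; simp [th]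
  have hla : ∀ i, ∃ la : ℤ, i < D → M * th i - r i = p * la := by
    intro i
    by_cases h : i < D
    · have : ((M * th i - r i : ℤ) : ZMod p) = 0 := by
        push_cast
        rw [hth, (hr i h).2]; simp
      obtain ⟨la, hla⟩ := (ZMod.intCast_zmod_eq_zero_iff_dvd _ _).1 this
      exact ⟨la, fun _ => hla⟩
    · exact ⟨0, fun h' => absurd h' h⟩
  choose la hla using hla
  have hNp : 0 < 2 * |N| + 2 := by positivity
  refine ⟨fun i => if i < D then th i else ρ' - ∑ j ∈ range D, g j * th j,
    fun i => if i < D then r i else M * ρ' - ∑ j ∈ range D, g j * r j,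
    fun i => if i < D then la i else - ∑ j ∈ range D, g j * la j, ?_, ?_, ?_, ?_, ?_⟩
  · intro i hi
    by_cases h : i < D
    · simp only [h, if_true, hth]
    · have : i = D := by omega
      subst this
      simp only [lt_irrefl, if_false]
      push_cast
      rw [hρ2, hρ, map_add, map_sum]
      have : ∀ j ∈ range i, χ ((g j : F) * (s^j * u)) = (g j : ZMod p) * (th j : ZMod p) := by
        intro j _
        rw [hth, ← zsmul_eq_mul, map_zsmul, zsmul_eq_mul]
      rw [sum_congr rfl this]
      ring
  · intro i hi
    by_cases h : i < D
    · simp only [h, if_true, hla]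
    · simp only [h, if_false]
      have : ∀ j ∈ range D, (p:ℤ) * (g j * la j) = M * (g j * th j) - g j * r j := by
        intro j hj
        linear_combination - g j * hla j (mem_range.1 hj)
      rw [mul_neg, mul_sum, sum_congr rfl this, sum_sub_distrib, mul_sub, mul_sum]
      ring
  · intro i hi
    by_cases h : i < D
    · simp only [h, if_true]
      calc (2 * |N| + 2) * |r i| ≤ (2 * |N| + 2) * R := by
            have := (hr i h).1
            gcongr
        _ < p := hc1
    · simp only [h, if_false]
      refine lt_of_le_of_lt ?_ hc2
      apply mul_le_mul_of_nonneg_left _ hNp.le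
      calc |M * ρ' - ∑ j ∈ range D, g j * r j| ≤ |M * ρ'| + |∑ j ∈ range D, g j * r j| := abs_sub _ _
        _ ≤ M * R' + ∑ j ∈ range D, |g j| * R := by
          gcongr
          · rw [abs_mul, abs_of_nonneg (by positivity : (0:ℤ) ≤ M)]; gcongr
          · refine (abs_sum_le_sum_abs _ _).trans (sum_le_sum fun j hj => ?_)
            rw [abs_mul]
            have := (hr j (mem_range.1 hj)).1
            gcongr
        _ = _ := by rw [sum_mul]
  · simp only [lt_irrefl, if_false]
    congr 1
    refine sum_congr rfl fun j hj => ?_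
    simp [mem_range.1 hj]
  · intro i hi
    simp only [hi, if_true]
    exact (hr i hi).1

/-- the Bohr-type set used for rounding -/
def CWB {F : Type} [Field F] {p : ℕ} (χ : F →+ ZMod p) (s ρ : F) (D M R R' : ℕ) (u : F) : Prop :=
  (∀ i < D, ∃ r : ℤ, |r| ≤ R ∧ (r : ZMod p) = M * χ (s^i * u)) ∧
    ∃ r : ℤ, |r| ≤ R' ∧ (r : ZMod p) = χ (ρ * u)

lemma cw_round (F : Type) [Field F] [Fintype F] (p : ℕ) [NeZero p] (χ : F →+ ZMod p) (hχ : χ ≠ 0)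
    (s : F) (N : ℤ) (g : ℕ → ℤ) (D M R R' : ℕ) (hM : 1 ≤ M) (ρ : F)
    (hρ : ρ = s^D + ∑ j ∈ range D, (g j : F) * s^j)
    (hc1 : (2 * |N| + 2) * R < p)
    (hc2 : (2 * |N| + 2) * (M * R' + (∑ j ∈ range D, |g j|) * R) < p)
    (hc3 : 12 * R * D ≤ p)
    (hinj : Function.Injective (fun c : Fin D → Fin M => ∑ i, ((c i : ℕ) : F) * s^(i:ℕ))) :
    ∃ lam : F → (Fin D → ZMod M),
      (∀ x y z, CWB χ s ρ D M R R' x → CWB χ s ρ D M R R' y → CWB χ s ρ D M R R' z →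
        (N : F) * (x - y) = s * (z - y) → N • (lam x - lam y) = cwT D g M (lam z - lam y)) ∧
      (∀ y, CWB χ s ρ D M R R' y → ∀ T : Finset F, (∀ z ∈ T, CWB χ s ρ D M R R' z ∧ lam z = lam y) →
        T.card * M^D ≤ 4 * Fintype.card F) := by
  classical
  have hex : ∀ u, ∃ th r la : ℕ → ℤ, CWB χ s ρ D M R R' u → 
      ((∀ i ≤ D, (th i : ZMod p) = χ (s^i * u)) ∧ (∀ i ≤ D, M * th i - r i = p * la i) ∧
      (∀ i ≤ D, (2 * |N| + 2) * |r i| < p) ∧ la D = - ∑ j ∈ range D, g j * la j ∧ ∀ i < D, |r i| ≤ R) := by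
    intro u
    by_cases h : CWB χ s ρ D M R R' u
    · obtain ⟨th, r, la, hh⟩ := cw_round_choice F p χ s N g D M R R' u (ρ * u) (by
        rw [hρ, add_mul, sum_mul]
        congr 1
        exact sum_congr rfl fun j _ => by ring) hc1 hc2 h.1 h.2
      exact ⟨th, r, la, fun _ => hh⟩
    · exact ⟨0, 0, 0, fun h' => absurd h' h⟩
  choose th r la hu using hex
  have hp : 0 < p := Nat.pos_of_ne_zero (NeZero.ne p)
  have hNp : 0 < 2 * |N| + 2 := by positivity
  refine ⟨fun u i => (la u i : ZMod M), ?_, ?_⟩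
  · intro x y z hx hy hz hxyz
    obtain ⟨x1, x2, x3, x4, x5⟩ := hu x hx
    obtain ⟨y1, y2, y3, y4, y5⟩ := hu y hy
    obtain ⟨z1, z2, z3, z4, z5⟩ := hu z hz
    have key : ∀ i < D, ((N * (la x i - la y i) - (la z (i+1) - la y (i+1)) : ℤ) : ZMod M) = 0 := by
      intro i hi
      have hE : ((N * (th x i - th y i) - (th z (i+1) - th y (i+1)) : ℤ) : ZMod p) = 0 := by
        push_cast
        rw [x1 i hi.le, y1 i hi.le, z1 (i+1) hi, y1 (i+1) hi, ← map_sub, ← map_sub, ← zsmul_eq_mul, ← map_zsmul, ← map_sub]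
        have : N • (s^i * x - s^i * y) - (s^(i+1) * z - s^(i+1) * y) = 0 := by
          rw [zsmul_eq_mul]
          linear_combination s^i * hxyz
        rw [this, map_zero]
      obtain ⟨e, he⟩ := (ZMod.intCast_zmod_eq_zero_iff_dvd _ _).1 hE
      set RR := N * (r x i - r y i) - (r z (i+1) - r y (i+1)) with hRR
      have h1 : RR = p * (M * e - (N * (la x i - la y i) - (la z (i+1) - la y (i+1)))) := by
        rw [hRR]
        linear_combination (M:ℤ) * he - N * x2 i hi.le + N * y2 i hi.le + z2 (i+1) hi - y2 (i+1) hi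
      have hb : (2 * |N| + 2) * |RR| < (2 * |N| + 2) * p := by
        have hab : |RR| ≤ |N| * (|r x i| + |r y i|) + (|r z (i+1)| + |r y (i+1)|) := by
          rw [hRR]
          refine (abs_sub _ _).trans ?_
          rw [abs_mul]
          gcongr <;> exact abs_sub _ _
        have a1 := x3 i hi.le
        have a2 := y3 i hi.le
        have a3 := z3 (i+1) hi
        have a4 := y3 (i+1) hi
        calc (2 * |N| + 2) * |RR| ≤ (2 * |N| + 2) * (|N| * (|r x i| + |r y i|) + (|r z (i+1)| + |r y (i+1)|)) := by gcongr
          _ = |N| * ((2 * |N| + 2) * |r x i| + (2 * |N| + 2) * |r y i|) + ((2 * |N| + 2) * |r z (i+1)| + (2 * |N| + 2) * |r y (i+1)|) := by ring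
          _ < |N| * (p + p) + (p + p) := by
            apply add_lt_add_of_le_of_lt
            · apply mul_le_mul_of_nonneg_left _ (abs_nonneg N)
              exact add_le_add a1.le a2.le
            · exact add_lt_add a3 a4
          _ = _ := by ring
      have hb' : |RR| < p := lt_of_mul_lt_mul_left hb hNp.le
      have h0 : RR = 0 := Int.eq_zero_of_abs_lt_dvd ⟨_, h1⟩ hb'
      rw [h0] at h1
      have hpz : (p:ℤ) ≠ 0 := by exact_mod_cast hp.ne'
      have h2 := (mul_eq_zero.1 h1.symm).resolve_left hpz
      rw [ZMod.intCast_zmod_eq_zero_iff_dvd]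
      exact ⟨e, by linarith⟩
    funext i
    have hk := key i i.2
    simp only [cwT, LinearMap.coe_mk, AddHom.coe_mk, Pi.smul_apply, Pi.sub_apply, zsmul_eq_mul]
    push_cast at hk
    rw [sub_eq_zero] at hk
    rw [hk]
    by_cases h : i.1 + 1 < D
    · simp [h]
    · have hD : i.1 + 1 = D := by omega
      rw [dif_neg h, hD, z4, y4]
      push_cast
      rw [Fin.sum_univ_eq_sum_range (fun j => (g j : ZMod M) * ((la z j : ZMod M) - la y j)) D]
      simp only [mul_sub, sum_sub_distrib]
      ring
  · intro y hy T hT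
    obtain ⟨y1, y2, y3, y4, y5⟩ := hu y hy
    have := cw_fourier F p χ hχ (fun c : Fin D → Fin M => ∑ i, ((c i : ℕ) : F) * s^(i:ℕ)) hinj 
      (T.image (fun z => z - y)) (by
        intro v hv c
        obtain ⟨z, hz, rfl⟩ := mem_image.1 hv
        obtain ⟨hzB, hzl⟩ := hT z hz
        obtain ⟨z1, z2, z3, z4, z5⟩ := hu z hzB
        have hw : ∀ i : Fin D, ∃ w : ℤ, M * w = r z i - r y i ∧ (w : ZMod p) = χ (s^(i:ℕ) * (z - y)) := by
          intro i
          have : ((la z i - la y i : ℤ) : ZMod M) = 0 := by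
            push_cast
            rw [sub_eq_zero]
            exact congrFun hzl i
          obtain ⟨k, hk⟩ := (ZMod.intCast_zmod_eq_zero_iff_dvd _ _).1 this
          refine ⟨th z i - th y i - p * k, ?_, ?_⟩
          · linear_combination z2 i i.2.le - y2 i i.2.le + (p:ℤ) * hk
          · push_cast
            rw [z1 i i.2.le, y1 i i.2.le, ← map_sub]
            simp [mul_sub]
        choose w hw1 hw2 using hw
        refine ⟨∑ i, (c i : ℤ) * w i, ?_, ?_⟩
        · have hb : |∑ i, ((c i : ℕ) : ℤ) * w i| ≤ ∑ i : Fin D, (2 * R : ℤ) := by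
            refine (abs_sum_le_sum_abs _ _).trans (sum_le_sum fun i _ => ?_)
            rw [abs_mul, abs_of_nonneg (by positivity : (0:ℤ) ≤ ((c i : ℕ) : ℤ))]
            calc ((c i : ℕ) : ℤ) * |w i| ≤ M * |w i| := by
                  gcongr
                  exact_mod_cast (c i).2.le
              _ = |r z i - r y i| := by rw [← hw1, abs_mul, abs_of_nonneg (by positivity : (0:ℤ) ≤ M)]
              _ ≤ |r z i| + |r y i| := abs_sub _ _
              _ ≤ R + R := add_le_add (z5 i i.2) (y5 i i.2)
              _ = 2 * R := by ring
          simp only [sum_const, card_univ, Fintype.card_fin, nsmul_eq_mul] at hb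
          have hc3' : (12 * R * D : ℤ) ≤ p := by exact_mod_cast hc3
          linarith
        · push_cast
          rw [sum_mul, map_sum]
          refine sum_congr rfl fun i _ => ?_
          rw [hw2, mul_assoc, ← nsmul_eq_mul, ← nsmul_eq_mul, map_nsmul])
    rw [card_image_of_injective _ sub_left_injective] at this
    simpa using this

open Polynomial in
lemma cw_aeval_card (D : ℕ) (g : ℕ → ℤ) (M : ℕ) : 
    Nat.card (Module.AEval' (cwT D g M)) = M^D := by
  rw [← Nat.card_congr (Module.AEval'.of (cwT D g M)).toEquiv]
  rw [Nat.card_fun, Nat.card_zmod, Nat.card_fin]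

lemma cw_aeval_finite (D : ℕ) (g : ℕ → ℤ) (M : ℕ) (hM : 1 ≤ M) : 
    Finite (Module.AEval' (cwT D g M)) := by
  have : NeZero M := ⟨by omega⟩
  exact Finite.of_equiv _ (Module.AEval'.of (cwT D g M)).toEquiv

open Polynomial in
lemma cw_aeval_cap (ℓ : ℕ) (hℓ : ℓ.Prime) (g : ℤ[X]) (hg : g.Monic) (hg1 : 1 ≤ g.natDegree) (N : ℤ)
    (h1 : ¬ (ℓ:ℤ) ∣ N) (h2 : ¬ (ℓ:ℤ) ∣ g.eval 0) (h3 : ¬ (ℓ:ℤ) ∣ g.eval N) :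
    ∃ m r, 1 ≤ m ∧ 1 ≤ r ∧ ∀ j k : ℕ, 1 ≤ j → 
      CWMod (C N) (X : ℤ[X]) m r (Module.AEval' (cwT (g^j).natDegree (g^j).coeff (ℓ^k))) := by
  obtain ⟨m, r, hm, hr, h⟩ := cw_module_cap ℓ hℓ g hg N h1 h2 h3
  refine ⟨m, r, hm, hr, fun j k hj => ?_⟩
  have := cw_aeval_finite (g^j).natDegree (g^j).coeff (ℓ^k) (Nat.one_le_pow _ _ hℓ.pos)
  refine h _ (j + k) ?_ ?_
  · intro x
    obtain ⟨y, rfl⟩ := (Module.AEval'.of (cwT (g^j).natDegree (g^j).coeff (ℓ^k))).surjective x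
    rw [← C_pow, Module.AEval.C_smul, ← map_smul]
    have h5 : ((ℓ:ZMod (ℓ^k)))^k = 0 := by
      rw [← Nat.cast_pow]
      exact ZMod.natCast_self (ℓ^k)
    have h6 : (((ℓ:ℤ)^(j+k)) • y) = 0 := by
      funext i
      simp [pow_add, h5]
    rw [h6, map_zero]
  · intro x
    obtain ⟨y, rfl⟩ := (Module.AEval'.of (cwT (g^j).natDegree (g^j).coeff (ℓ^k))).surjective x
    have h0 := cwT_aeval (g^j) (hg.pow j) (by rw [hg.natDegree_pow]; exact Nat.mul_pos hj hg1) (ℓ^k)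
    have h4 := Module.AEval.of_aeval_smul (a := cwT (g^j).natDegree (g^j).coeff (ℓ^k)) (R := ℤ) (g^j) y
    rw [add_comm, pow_add, mul_smul]
    erw [← h4]
    rw [h0]
    simp

open Polynomial in
lemma cw_glue (G : ℤ[X]) (hG : G.Monic) (N : ℤ) (M K m r : ℕ)
    (hM : 1 ≤ M) (hK : 1 ≤ K)
    (hmod : CWMod (C N) (X : ℤ[X]) m r (Module.AEval' (cwT G.natDegree G.coeff M)))
    (hnum : (4 * K^3)^(m*r) < M^G.natDegree) :
    ∃ c : ℝ, 0 < c ∧ ∀ (F : Type) [Field F] [Fintype F] (t : F) (p : ℕ) [NeZero p]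
      (χ : F →+ ZMod p) (R R' : ℕ), χ ≠ 0 → (N : F) ≠ 0 → 
      (2 * |N| + 2) * (R:ℤ) < p → 
      (2 * |N| + 2) * (M * R' + (∑ j ∈ range G.natDegree, |G.coeff j|) * R) < p →
      12 * R * G.natDegree ≤ p → 
      Function.Injective (fun c : Fin G.natDegree → Fin M => ∑ i, ((c i : ℕ) : F) * (N * t)^(i:ℕ)) →
      (∀ B : Finset F, (∀ u, CWB χ (N * t) (aeval (N * t) G) G.natDegree M R R' u → u ∈ B) → 
        Fintype.card F ≤ B.card * K) → CWGood F t c := by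
  classical
  obtain ⟨C0, hC0, hcard⟩ := hmod
  rw [cw_aeval_card] at hcard
  obtain ⟨n1, n2, n3⟩ := cw_numeric (M^G.natDegree) C0.card m r 4 K (Nat.one_le_pow _ _ hM) (by norm_num) hK hcard hnum
  obtain ⟨c, hc, H⟩ := cw_good_of_data _ _ n1 n2 n3
  refine ⟨c, hc, ?_⟩
  intro F _ _ t p _ χ R R' hχ hN hc1 hc2 hc3 hinj hB
  apply H
  have := cw_aeval_finite G.natDegree G.coeff M hM
  obtain ⟨lam, l1, l2⟩ := cw_round F p χ hχ (N * t) N G.coeff G.natDegree M R R' hM (aeval (N * t) G) 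
    (by conv_lhs => rw [hG.as_sum]
        simp) hc1 hc2 hc3 hinj
  have key := cw_round_data F t N (Module.AEval' (cwT G.natDegree G.coeff M))
    (univ.filter (CWB χ (N * t) (aeval (N * t) G) G.natDegree M R R'))
    (fun u => Module.AEval'.of (cwT G.natDegree G.coeff M) (lam u)) 4 K hK m C0 hC0 ?_ ?_ ?_
  · rw [cw_aeval_card] at key
    exact_mod_cast key
  · intro x hx y hy z hz h
    have := l1 x y z (mem_filter.1 hx).2 (mem_filter.1 hy).2 (mem_filter.1 hz).2 (by rw [h]; ring)
    rw [← map_sub, ← map_sub, Module.AEval.C_smul, ← map_smul, Module.AEval'.X_smul_of, this]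
  · intro y hy T hT
    rw [cw_aeval_card]
    refine l2 y (mem_filter.1 hy).2 T fun z hz => ⟨(mem_filter.1 (hT z hz).1).2, ?_⟩
    exact (Module.AEval'.of (cwT G.natDegree G.coeff M)).injective (hT z hz).2
  · exact hB _ fun u hu => mem_filter.2 ⟨mem_univ _, hu⟩

lemma cw_char (F : Type) [Field F] (p : ℕ) [Fact p.Prime] [CharP F p] : ∃ χ : F →+ ZMod p, χ ≠ 0 := by
  let : Algebra (ZMod p) F := ZMod.algebra F p
  obtain ⟨f, hf⟩ := Module.Projective.exists_dual_eq_one (ZMod p) (x := (1:F)) one_ne_zero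
  refine ⟨f.toAddMonoidHom, fun h => ?_⟩
  have := DFunLike.congr_fun h 1
  simp [hf] at this

lemma cw_abs_le_div (p H : ℕ) (hH : 1 ≤ H) (r : ℤ) (h : |r| * H < p) : |r| ≤ ((p / H : ℕ) : ℤ) := by
  rw [Int.natCast_div, Int.le_ediv_iff_mul_le (by exact_mod_cast hH)]
  exact h.le

def cwMulHom {F : Type} [Field F] {p : ℕ} (χ : F →+ ZMod p) (a : F) : F →+ ZMod p :=
  χ.comp (AddMonoidHom.mulLeft a)

lemma cw_pig1 (F : Type) [Field F] [Fintype F] (p : ℕ) [NeZero p] (χ : F →+ ZMod p) (s ρ : F) (D M H : ℕ)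
    (hM : 1 ≤ M) (hH : 1 ≤ H) (B : Finset F) 
    (hB : ∀ u, CWB χ s ρ D M (p / H) (p / (H * M)) u → u ∈ B) :
    Fintype.card F ≤ B.card * (H * M * H^D) := by
  have := cw_pigeon F p (ι := Option (Fin D)) 
    (fun i => i.elim (cwMulHom χ ρ) (fun i => (M:ℕ) • cwMulHom χ (s^(i:ℕ))))
    (fun i => i.elim (H * M) (fun _ => H)) (by
      rintro (_ | i)
      · exact Nat.mul_pos hH hM
      · exact hH) B (by
      intro u hu
      apply hB
      refine ⟨fun i hi => ?_, ?_⟩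
      · obtain ⟨r, h1, h2⟩ := hu (some ⟨i, hi⟩)
        refine ⟨r, cw_abs_le_div _ _ hH _ h1, ?_⟩
        rw [h2]; simp [cwMulHom]
      · obtain ⟨r, h1, h2⟩ := hu none
        exact ⟨r, cw_abs_le_div _ _ (Nat.mul_pos hH hM) _ h1, h2⟩)
  simpa [Fintype.prod_option] using this

lemma cw_pig2 (F : Type) [Field F] [Fintype F] (p : ℕ) [NeZero p] (χ : F →+ ZMod p) (s : F) (D M H : ℕ)
    (hH : 1 ≤ H) (B : Finset F) 
    (hB : ∀ u, CWB χ s 0 D M (p / H) 0 u → u ∈ B) :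
    Fintype.card F ≤ B.card * H^D := by
  have := cw_pigeon F p (ι := Fin D) 
    (fun i => (M:ℕ) • cwMulHom χ (s^(i:ℕ)))
    (fun _ => H) (fun _ => hH) B (by
      intro u hu
      apply hB
      refine ⟨fun i hi => ?_, 0, by simp, by simp⟩
      obtain ⟨r, h1, h2⟩ := hu ⟨i, hi⟩
      refine ⟨r, cw_abs_le_div _ _ hH _ h1, ?_⟩
      rw [h2]; simp [cwMulHom])
  simpa using this

lemma cw_pig3 (F : Type) [Field F] [Fintype F] (p : ℕ) [NeZero p] (χ : F →+ ZMod p) (s ρ : F) (D : ℕ)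
    (B : Finset F) (hB : ∀ u, CWB χ s ρ D p 0 0 u → u ∈ B) :
    Fintype.card F ≤ B.card * p := by
  have hp : 1 ≤ p := Nat.one_le_iff_ne_zero.2 (NeZero.ne p)
  have := cw_pigeon F p (ι := Unit) 
    (fun i => cwMulHom χ ρ) (fun _ => p) (fun _ => hp) B (by
      intro u hu
      apply hB
      refine ⟨fun i hi => ⟨0, by simp, by simp⟩, ?_⟩
      obtain ⟨r, h1, h2⟩ := hu ()
      refine ⟨r, ?_, h2⟩
      have : |r| < 1 := by
        by_contra hc
        push Not at hc
        have : (p:ℤ) ≤ |r| * p := le_mul_of_one_le_left (by positivity) hc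
        omega
      exact_mod_cast Int.lt_add_one_iff.1 this)
  simpa using this

open Polynomial in
/-- uniform bound over all specialisations killing the ideal -/
def CWPhi (I : Ideal ℤ[X]) : Prop := 
  ∃ c : ℝ, 0 < c ∧ ∀ (F : Type) [Field F] [Fintype F] (t : F), t ≠ 0 → t ≠ 1 → 
    (∀ f ∈ I, aeval t f = 0) → CWGood F t c

open Polynomial in
/-- uniform bound over an open set of specialisations -/
def CWOpen (I : Ideal ℤ[X]) : Prop := 
  ∃ f ∉ I, ∃ c : ℝ, 0 < c ∧ ∀ (F : Type) [Field F] [Fintype F] (t : F), t ≠ 0 → t ≠ 1 → 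
    (∀ f ∈ I, aeval t f = 0) → aeval t f ≠ 0 → CWGood F t c

open Polynomial in
lemma cw_sep (I : Ideal ℤ[X]) [I.IsPrime] (D M : ℕ) (N : ℤ) (hN : C N ∉ I)
    (hd : ∀ e : Fin D → ℤ, e ≠ 0 → (∀ i, |e i| < M) → ∑ i, C (e i) * (C N * X)^(i:ℕ) ∉ I) :
    ∃ f ∉ I, ∀ (F : Type) [Field F] (t : F), aeval t f ≠ 0 → (N : F) ≠ 0 ∧ 
      Function.Injective (fun c : Fin D → Fin M => ∑ i, ((c i : ℕ) : F) * (N * t)^(i:ℕ)) := by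
  classical
  refine ⟨C N * ∏ cc ∈ (univ : Finset ((Fin D → Fin M) × (Fin D → Fin M))).filter (fun cc => cc.1 ≠ cc.2),
    ∑ i, C (((cc.1 i : ℕ) : ℤ) - ((cc.2 i : ℕ) : ℤ)) * (C N * X)^(i:ℕ), ?_, ?_⟩
  · intro h
    rcases Ideal.IsPrime.mem_or_mem ‹_› h with h | h
    · exact hN h
    · rw [Ideal.IsPrime.prod_mem_iff] at h
      obtain ⟨cc, hcc, h⟩ := h
      refine hd _ ?_ ?_ h
      · intro h0
        apply (mem_filter.1 hcc).2
        funext i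
        have := congrFun h0 i
        simp only [Pi.zero_apply] at this
        apply Fin.ext
        omega
      · intro i
        have h1 := (cc.1 i).2
        have h2 := (cc.2 i).2
        rw [abs_lt]
        constructor <;> omega
  · intro F _ t h
    rw [map_mul, map_prod] at h
    have h1 := left_ne_zero_of_mul h
    have h2 := right_ne_zero_of_mul h
    refine ⟨by simpa using h1, fun c c' hcc => ?_⟩
    by_contra hne
    rw [prod_ne_zero_iff] at h2
    apply h2 (c, c') (mem_filter.2 ⟨mem_univ _, hne⟩)
    simp only at hcc
    simp only [map_sum, map_mul, map_pow, aeval_X, aeval_C, map_sub, sub_mul, sum_sub_distrib, sub_eq_zero]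
    simpa using hcc

lemma cw_bounds (p H D M R' : ℕ) (a S : ℤ) (hp : 1 ≤ p) (ha : 0 ≤ a) (hS : 0 ≤ S)
    (h1 : a * (1 + S) < H) (h2 : 12 * D ≤ H) (hR : M * R' ≤ p / H) :
    a * ((p / H : ℕ) : ℤ) < p ∧ a * (M * R' + S * ((p / H : ℕ) : ℤ)) < p ∧ 12 * (p / H) * D ≤ p := by
  have h0 : p / H * H ≤ p := Nat.div_mul_le_self p H
  have hH : 1 ≤ H := by
    have : 0 ≤ a * (1 + S) := by positivity
    omega
  set R := p / H
  have h0' : (R:ℤ) * H ≤ p := by exact_mod_cast h0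
  have hR' : (M:ℤ) * R' ≤ R := by exact_mod_cast hR
  have key : a * (1 + S) * R < p := by
    rcases Nat.eq_zero_or_pos R with h | h
    · rw [h]; simp; omega
    · have : a * (1 + S) * R < H * R := mul_lt_mul_of_pos_right h1 (by exact_mod_cast h)
      linarith [mul_comm (H:ℤ) R]
  have hRn : (0:ℤ) ≤ R := by positivity
  refine ⟨?_, ?_, ?_⟩
  · refine lt_of_le_of_lt ?_ key
    have : 0 ≤ a * S * R := by positivity
    nlinarith
  · refine lt_of_le_of_lt ?_ key
    have : a * (M * R' + S * R) ≤ a * (R + S * R) := by gcongr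
    linarith
  · calc 12 * R * D = R * (12 * D) := by ring
      _ ≤ R * H := by gcongr
      _ ≤ p := h0

open Polynomial in
lemma cw_sum_coeff (D : ℕ) (e : Fin D → ℤ) (N : ℤ) (i : Fin D) :
    (∑ i, C (e i) * (C N * X)^(i:ℕ)).coeff i = e i * N^(i:ℕ) := by
  simp only [mul_pow, ← C_pow, ← mul_assoc, ← C_mul, finsetSum_coeff, coeff_C_mul_X_pow]
  rw [sum_eq_single i]
  · simp
  · intro b _ hb
    rw [if_neg]
    intro h
    exact hb (Fin.ext h.symm)
  · simp

open Polynomial in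
lemma cw_sum_deg (D : ℕ) (hD : 1 ≤ D) (e : Fin D → ℤ) (N : ℤ) :
    (∑ i, C (e i) * (C N * X)^(i:ℕ)).natDegree < D := by
  refine lt_of_le_of_lt (natDegree_sum_le_of_forall_le _ _ (n := D - 1) ?_) (by omega)
  intro i _
  simp only [mul_pow, ← C_pow, ← mul_assoc, ← C_mul]
  refine (natDegree_C_mul_X_pow_le _ _).trans ?_
  have := i.2
  omega

open Polynomial in
/-- the auxiliary quadratic polynomial -/
noncomputable def cwG : ℤ[X] := X^2 - X + 1

open Polynomial in
lemma cwG_nat : cwG.natDegree = 2 := by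
  unfold cwG; compute_degree!

open Polynomial in
lemma cwG_monic : cwG.Monic := by
  unfold cwG; monicity!

open Polynomial in
lemma cw_open_bot : CWOpen (⊥ : Ideal ℤ[X]) := by
  obtain ⟨m, r, hm, hr, hmod⟩ := cw_aeval_cap 2 Nat.prime_two cwG cwG_monic (by rw [cwG_nat]; norm_num) 1
    (by norm_num) (by norm_num [cwG]) (by norm_num [cwG])
  set j := 3 * m * r + 1 with hj
  set G := cwG^j with hG
  have hGm : G.Monic := cwG_monic.pow j
  have hGd : G.natDegree = 2 * j := by rw [hG, cwG_monic.natDegree_pow, cwG_nat, mul_comm]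
  set S : ℤ := ∑ i ∈ range G.natDegree, |G.coeff i| with hS
  have hS0 : 0 ≤ S := sum_nonneg fun i _ => abs_nonneg _
  obtain ⟨S', hS'⟩ := Int.eq_ofNat_of_zero_le hS0
  set H := 4 * (1 + S') + 12 * G.natDegree + 1 with hH
  have hH1 : 1 ≤ H := by omega
  set k := (4 * (H * H^G.natDegree)^3)^(m*r) with hk
  have h2k : 1 ≤ 2^k := Nat.one_le_two_pow
  have hnum : (4 * (H * 2^k * H^G.natDegree)^3)^(m*r) < (2^k)^G.natDegree := by
    have e1 : (4 * (H * 2^k * H^G.natDegree)^3)^(m*r) = k * (2^k)^(3*m*r) := by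
      rw [hk]; generalize (2:ℕ)^((4 * (H * H^G.natDegree)^3)^(m*r)) = z
      rw [mul_assoc 3 m r, pow_mul z, ← mul_pow]; ring
    rw [e1]
    calc k * (2^k)^(3*m*r) < 2^k * (2^k)^(3*m*r) := Nat.mul_lt_mul_of_pos_right Nat.lt_two_pow_self (by positivity)
      _ = (2^k)^(3*m*r+1) := by ring
      _ ≤ _ := Nat.pow_le_pow_right h2k (by omega)
  obtain ⟨c, hc, hgl⟩ := cw_glue G hGm 1 (2^k) (H * 2^k * H^G.natDegree) m r h2k 
    (Nat.one_le_iff_ne_zero.2 (by positivity)) (hmod j k (by omega)) hnum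
  obtain ⟨f, hf, hsep⟩ := cw_sep (⊥ : Ideal ℤ[X]) G.natDegree (2^k) 1 (by simp) (by
    intro e he _ h0
    apply he
    funext i
    have := cw_sum_coeff G.natDegree e 1 i
    rw [(Submodule.mem_bot _).1 h0] at this
    simpa using this.symm)
  refine ⟨f, hf, c, hc, ?_⟩
  intro F _ _ t _ _ _ hft
  obtain ⟨s1, s2⟩ := hsep F t hft
  obtain ⟨p, hp⟩ := CharP.exists F
  have hpp : p.Prime := (CharP.char_is_prime_or_zero F p).resolve_right (CharP.char_ne_zero_of_finite F p)
  have : Fact p.Prime := ⟨hpp⟩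
  obtain ⟨χ, hχ⟩ := cw_char F p
  obtain ⟨b1, b2, b3⟩ := cw_bounds p H G.natDegree (2^k) (p / (H * 2^k)) (2 * |1| + 2) S hpp.one_lt.le 
    (by norm_num) hS0 (by rw [hS', hH]; push_cast; norm_num) (by omega) (by
      rw [← Nat.div_div_eq_div_mul]; exact Nat.mul_div_le _ _)
  refine hgl F t p χ (p / H) (p / (H * 2^k)) hχ s1 b1 b2 b3 s2 ?_
  intro B hB
  exact cw_pig1 F p χ _ _ _ _ _ h2k hH1 B hB

open Polynomial in
lemma cw_open_p (p : ℕ) (hpp : p.Prime) (I : Ideal ℤ[X]) [I.IsPrime] (hpI : C (p:ℤ) ∈ I) 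
    (hI : ∀ f ∈ I, C (p:ℤ) ∣ f) : CWOpen I := by
  have h1p : ¬ (p:ℤ) ∣ 1 := by
    intro h
    have := Int.le_of_dvd one_pos h
    have := hpp.one_lt
    omega
  obtain ⟨m, r, hm, hr, hmod⟩ := cw_aeval_cap p hpp cwG cwG_monic (by rw [cwG_nat]; norm_num) 1
    h1p (by simpa [cwG] using h1p) (by simpa [cwG] using h1p)
  set j := (4 * p^3)^(m*r) with hj
  have hp1 := hpp.pos
  have hj1 : 1 ≤ j := Nat.one_le_iff_ne_zero.2 (by positivity)
  set G := cwG^j with hG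
  have hGm : G.Monic := cwG_monic.pow j
  have hGd : G.natDegree = 2 * j := by rw [hG, cwG_monic.natDegree_pow, cwG_nat, mul_comm]
  have hnum : (4 * p^3)^(m*r) < p^G.natDegree := by
    rw [← hj]
    calc j < p^j := Nat.lt_pow_self hpp.one_lt
      _ ≤ _ := Nat.pow_le_pow_right hp1 (by omega)
  have hmod' := hmod j 1 hj1
  rw [pow_one] at hmod'
  obtain ⟨c, hc, hgl⟩ := cw_glue G hGm 1 p p m r hp1 hp1 hmod' hnum
  obtain ⟨f, hf, hsep⟩ := cw_sep I G.natDegree p 1 (by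
      rw [C_1]; exact (Ideal.ne_top_iff_one I).1 (Ideal.IsPrime.ne_top ‹_›)) (by
    intro e he he2 h0
    apply he
    funext i
    have h3 := cw_sum_coeff G.natDegree e 1 i
    have h4 := (C_dvd_iff_dvd_coeff _ _).1 (hI _ h0) i
    rw [h3, one_pow, mul_one] at h4
    exact Int.eq_zero_of_abs_lt_dvd h4 (he2 i))
  refine ⟨f, hf, c, hc, ?_⟩
  intro F _ _ t _ _ hk hft
  obtain ⟨s1, s2⟩ := hsep F t hft
  have hpF : (p : F) = 0 := by simpa using hk _ hpI
  have : Fact p.Prime := ⟨hpp⟩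
  have : CharP F p := (CharP.charP_iff_prime_eq_zero hpp).2 hpF
  obtain ⟨χ, hχ⟩ := cw_char F p
  refine hgl F t p χ 0 0 hχ s1 (by simpa using hp1) (by simpa using hp1) (by simp) s2 ?_
  intro B hB
  exact cw_pig3 F p χ _ _ _ B hB

open Polynomial in
lemma cw_open_deg (I : Ideal ℤ[X]) [I.IsPrime] (hX : X ∉ I) (hX1 : X - 1 ∉ I) (hne : I ≠ ⊥)
    (hconst : ∀ a : ℤ, C a ∈ I → a = 0) : CWOpen I := by
  classical
  obtain ⟨h0, h0I, h00⟩ := Submodule.exists_mem_ne_zero_of_ne_bot hne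
  have hex : ∃ d, ∃ h ∈ I, h ≠ 0 ∧ h.natDegree = d := ⟨_, h0, h0I, h00, rfl⟩
  obtain ⟨h, hI, hh0, hdeg⟩ := Nat.find_spec hex
  have hmin : ∀ q ∈ I, q ≠ 0 → h.natDegree ≤ q.natDegree := by
    intro q hq hq0
    rw [hdeg]
    exact Nat.find_min' hex ⟨q, hq, hq0, rfl⟩
  have hD : 1 ≤ h.natDegree := by
    by_contra hc
    have : h = C (h.coeff 0) := eq_C_of_natDegree_eq_zero (by omega)
    rw [this] at hI
    apply hh0
    rw [this, hconst _ hI, C_0]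
  have hroot : ∀ a : ℤ, X - C a ∉ I → h.eval a ≠ 0 := by
    intro a ha hev
    obtain ⟨q, hq⟩ := dvd_iff_isRoot.2 hev
    have hq0 : q ≠ 0 := by rintro rfl; exact hh0 (by rw [hq, mul_zero])
    have hqI : q ∈ I := (Ideal.IsPrime.mem_or_mem ‹_› (hq ▸ hI : (X - C a) * q ∈ I)).resolve_left ha
    have h1 := hmin q hqI hq0
    have h2 : h.natDegree = (X - C a).natDegree + q.natDegree := by
      conv_lhs => rw [hq]
      exact natDegree_mul (X_sub_C_ne_zero a) hq0
    rw [natDegree_X_sub_C] at h2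
    omega
  have hr0 : h.eval 0 ≠ 0 := hroot 0 (by simpa using hX)
  have hr1 : h.eval 1 ≠ 0 := hroot 1 (by simpa using hX1)
  set N := h.leadingCoeff with hN
  have hN0 : N ≠ 0 := leadingCoeff_ne_zero.2 hh0
  set G := h.integralNormalization with hG
  have hGm : G.Monic := monic_integralNormalization hh0
  have hGd : G.natDegree = h.natDegree := natDegree_integralNormalization
  have hev : ∀ a : ℤ, G.eval (N * a) = N^(h.natDegree - 1) * h.eval a := by
    intro a
    exact integralNormalization_eval₂_leadingCoeff_mul hD (RingHom.id ℤ) a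
  have hg0 : G.eval 0 ≠ 0 := by
    have := hev 0
    rw [mul_zero] at this
    rw [this]; exact mul_ne_zero (pow_ne_zero _ hN0) hr0
  have hg1 : G.eval N ≠ 0 := by
    have := hev 1
    rw [mul_one] at this
    rw [this]; exact mul_ne_zero (pow_ne_zero _ hN0) hr1
  obtain ⟨ℓ, hℓ1, hℓ⟩ := Nat.exists_infinite_primes ((N * G.eval 0 * G.eval N).natAbs + 1)
  have hnd : ¬ (ℓ:ℤ) ∣ N * G.eval 0 * G.eval N := by
    intro hd
    have h1 := Int.natAbs_dvd_natAbs.2 hd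
    have h2 := Nat.le_of_dvd (Int.natAbs_pos.2 (mul_ne_zero (mul_ne_zero hN0 hg0) hg1)) h1
    simp only [Int.natAbs_natCast] at h2
    omega
  obtain ⟨m, r, hm, hr, hmod⟩ := cw_aeval_cap ℓ hℓ G hGm (by omega) N
    (fun h => hnd ((h.mul_right _).mul_right _)) (fun h => hnd ((h.mul_left _).mul_right _)) (fun h => hnd (h.mul_left _))
  set S : ℤ := ∑ i ∈ range G.natDegree, |G.coeff i| with hS
  have hS0 : 0 ≤ S := sum_nonneg fun i _ => abs_nonneg _
  obtain ⟨S', hS'⟩ := Int.eq_ofNat_of_zero_le (show 0 ≤ (2 * |N| + 2) * (1 + S) by positivity)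
  set H := S' + 12 * G.natDegree + 1 with hH
  have hH1 : 1 ≤ H := by omega
  set k := (4 * (H^G.natDegree)^3)^(m*r) with hk
  have h2k : 1 ≤ ℓ^k := Nat.one_le_pow _ _ hℓ.pos
  have hnum : (4 * (H^G.natDegree)^3)^(m*r) < (ℓ^k)^G.natDegree := by
    rw [← hk]
    calc k < ℓ^k := Nat.lt_pow_self hℓ.one_lt
      _ ≤ _ := Nat.le_self_pow (by omega) _
  have hmod' := hmod 1 k le_rfl
  rw [pow_one] at hmod'
  obtain ⟨c, hc, hgl⟩ := cw_glue G hGm N (ℓ^k) (H^G.natDegree) m r h2k 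
    (Nat.one_le_pow _ _ hH1) hmod' hnum
  obtain ⟨f, hf, hsep⟩ := cw_sep I G.natDegree (ℓ^k) N (fun hc => hN0 (hconst _ hc)) (by
    intro e he _ h0
    have hz : (∑ i, C (e i) * (C N * X)^(i:ℕ)) = 0 := by
      by_contra hz
      have h1 := hmin _ h0 hz
      have h2 := cw_sum_deg G.natDegree (by omega) e N
      omega
    apply he
    funext i
    have := cw_sum_coeff G.natDegree e N i
    rw [hz, coeff_zero] at this
    exact (mul_eq_zero.1 this.symm).resolve_right (pow_ne_zero _ hN0))
  refine ⟨f, hf, c, hc, ?_⟩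
  intro F _ _ t _ _ hkill hft
  obtain ⟨s1, s2⟩ := hsep F t hft
  have hρ : aeval ((N:F) * t) G = 0 := by
    have := integralNormalization_eval₂_leadingCoeff_mul hD (algebraMap ℤ F) t
    have h2 := hkill h hI
    rw [aeval_def] at h2 ⊢
    rw [h2, mul_zero] at this
    simpa using this
  obtain ⟨p, hp⟩ := CharP.exists F
  have hpp : p.Prime := (CharP.char_is_prime_or_zero F p).resolve_right (CharP.char_ne_zero_of_finite F p)
  have : Fact p.Prime := ⟨hpp⟩
  obtain ⟨χ, hχ⟩ := cw_char F p
  obtain ⟨b1, b2, b3⟩ := cw_bounds p H G.natDegree (ℓ^k) 0 (2 * |N| + 2) S hpp.one_lt.le 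
    (by positivity) hS0 (by rw [hS', hH]; push_cast; linarith [Int.natCast_nonneg G.natDegree]) (by omega) (by simp)
  refine hgl F t p χ (p / H) 0 hχ s1 b1 b2 b3 s2 ?_
  rw [hρ]
  intro B hB
  exact cw_pig2 F p χ _ _ _ _ hH1 B hB

open Polynomial in
lemma cw_exists_monic (p : ℕ) (hpp : p.Prime) (I : Ideal ℤ[X]) (hpI : C (p:ℤ) ∈ I) (f : ℤ[X]) (hf : f ∈ I)
    (hnd : ¬ C (p:ℤ) ∣ f) : ∃ g ∈ I, g.Monic := by
  have : Fact p.Prime := ⟨hpp⟩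
  have hker : ∀ h : ℤ[X], h.map (Int.castRingHom (ZMod p)) = 0 → C (p:ℤ) ∣ h := by
    intro h hh
    rw [C_dvd_iff_dvd_coeff]
    intro i
    have := congrArg (fun q => q.coeff i) hh
    simp only [coeff_map, coeff_zero, eq_intCast] at this
    exact (ZMod.intCast_zmod_eq_zero_iff_dvd _ p).1 this
  set F := f.map (Int.castRingHom (ZMod p)) with hF
  have hF0 : F ≠ 0 := fun h => hnd (hker f h)
  obtain ⟨b, hb⟩ := ZMod.intCast_surjective (F.leadingCoeff)⁻¹
  have hbm : (C b * f).map (Int.castRingHom (ZMod p)) = C (F.leadingCoeff)⁻¹ * F := by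
    rw [Polynomial.map_mul, map_C, eq_intCast, hb]
  have hm : (C (F.leadingCoeff)⁻¹ * F).Monic := by
    rw [mul_comm]; exact monic_mul_leadingCoeff_inv hF0
  obtain ⟨g, hg1, _, hg2⟩ := lifts_and_natDegree_eq_and_monic (f := Int.castRingHom (ZMod p)) 
    (by rw [mem_lifts]; exact ⟨C b * f, hbm⟩) hm
  refine ⟨g, ?_, hg2⟩
  have h1 : C (p:ℤ) ∣ g - C b * f := by
    apply hker
    rw [Polynomial.map_sub, hg1, hbm, sub_self]
  have h2 : g = (g - C b * f) + C b * f := by ring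
  rw [h2]
  exact I.add_mem (I.mem_of_dvd h1 hpI) (I.mul_mem_left _ hf)

lemma cw_fiber (F Q : Type) [AddCommGroup F] [AddCommGroup Q] [Fintype F] (lam : F →+ Q)
    (hs : Function.Surjective lam) (y : F) (T : Finset F) (hT : ∀ z ∈ T, lam z = lam y) :
    T.card * Nat.card Q ≤ Fintype.card F := by
  classical
  have h1 : T.card ≤ Nat.card lam.ker := by
    rw [← Nat.card_eq_finsetCard T]
    refine Nat.card_le_card_of_injective (fun z : T => (⟨z.1 - y, by
      rw [AddMonoidHom.mem_ker, map_sub, hT z.1 z.2, sub_self]⟩ : lam.ker)) ?_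
    intro z z' h
    have := congrArg Subtype.val h
    simp only [sub_left_inj] at this
    exact Subtype.ext this
  have h2 : Nat.card lam.ker * Nat.card Q = Nat.card F := by
    rw [← lam.ker.card_mul_index, AddSubgroup.index_ker, AddMonoidHom.range_eq_top.2 hs]
    simp
  rw [← Nat.card_eq_fintype_card, ← h2]
  gcongr

open Polynomial in
lemma cw_phi_max (p : ℕ) (hpp : p.Prime) (I : Ideal ℤ[X]) [I.IsPrime] (hX : X ∉ I) (hX1 : X - 1 ∉ I)
    (hpI : C (p:ℤ) ∈ I) (f : ℤ[X]) (hf : f ∈ I) (hnd : ¬ C (p:ℤ) ∣ f) : CWPhi I := by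
  classical
  obtain ⟨g, hgI, hg⟩ := cw_exists_monic p hpp I hpI f hf hnd
  have hfin : Finite (ℤ[X] ⧸ I) := cw_finite_quot I p (by exact_mod_cast hpp.ne_zero) g hg hpI hgI
  have hmax : I.IsMaximal := Ideal.Quotient.maximal_of_isField _ (Finite.isField_of_domain _)
  obtain ⟨m, r, hm, hr, C0, hC0, hcard⟩ := cw_simple_mod I 1 (by
    rw [C_1]; exact (Ideal.ne_top_iff_one I).1 hmax.ne_top) hX (by simpa using hX1)
  let _ : Field (ℤ[X] ⧸ I) := Ideal.Quotient.field I
  have hq : 1 < Nat.card (ℤ[X] ⧸ I) := Finite.one_lt_card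
  obtain ⟨n1, n2, n3⟩ := cw_numeric (Nat.card (ℤ[X] ⧸ I)) C0.card m r 1 1 hq.le le_rfl le_rfl hcard (by simpa using hq)
  obtain ⟨c, hc, H⟩ := cw_good_of_data _ _ n1 n2 n3
  refine ⟨c, hc, ?_⟩
  intro F _ _ t _ _ hk
  apply H
  let φ : (ℤ[X] ⧸ I) →+* F := Ideal.Quotient.lift I (aeval t : ℤ[X] →ₐ[ℤ] F).toRingHom hk
  let _ : Algebra (ℤ[X] ⧸ I) F := φ.toAlgebra
  obtain ⟨L, hL⟩ := Module.Projective.exists_dual_eq_one (ℤ[X] ⧸ I) (x := (1:F)) one_ne_zero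
  have hsurj : Function.Surjective L := fun a => ⟨a • 1, by rw [map_smul, hL]; simp⟩
  refine cw_round_data F t 1 (ℤ[X] ⧸ I) univ L 1 1 le_rfl m C0 hC0 ?_ ?_ ?_
  · intro x _ y _ z _ h
    have h1 : t * (z - y) = (Ideal.Quotient.mk I X) • (z - y) := by
      rw [Algebra.smul_def]
      congr 1
      change t = φ (Ideal.Quotient.mk I X)
      simp [φ]
    rw [← map_sub, ← map_sub, h, h1, map_smul, C_1, one_smul]
    rfl
  · intro y _ T hT
    rw [one_mul]
    exact cw_fiber F _ L.toAddMonoidHom hsurj y T fun z hz => (hT z hz).2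
  · simp

open Polynomial in
lemma CWPhi.of_open (I : Ideal ℤ[X]) (h : CWOpen I) (ih : ∀ J, I < J → CWPhi J) : CWPhi I := by
  obtain ⟨f, hf, c, hc, hgood⟩ := h
  obtain ⟨c', hc', hgood'⟩ := ih (I ⊔ Ideal.span {f}) (left_lt_sup.2 (by
    rw [Ideal.span_singleton_le_iff_mem]; exact hf))
  refine ⟨min c c', lt_min hc hc', ?_⟩
  intro F _ _ t h0 h1 hk
  by_cases hft : aeval t f = 0
  · refine (hgood' F t h0 h1 ?_).mono (min_le_right _ _)
    have : I ⊔ Ideal.span {f} ≤ RingHom.ker (aeval t : ℤ[X] →ₐ[ℤ] F) :=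
      sup_le (fun x hx => hk x hx) ((Ideal.span_singleton_le_iff_mem _).2 hft)
    exact fun x hx => this hx
  · exact (hgood F t h0 h1 hk hft).mono (min_le_left _ _)

open Polynomial in
lemma cw_phi_all (I : Ideal ℤ[X]) : CWPhi I := by
  classical
  refine IsNoetherian.induction (R := ℤ[X]) (M := ℤ[X]) (P := CWPhi) ?_ I
  intro (I : Ideal ℤ[X]) ih
  have ih' : ∀ J, I < J → CWPhi J := fun J hJ => ih J hJ
  by_cases htop : I = ⊤
  · refine ⟨1, one_pos, fun F _ _ t _ _ hk => ?_⟩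
    have := hk 1 (by rw [htop]; trivial)
    simp at this
  by_cases hprime : I.IsPrime
  swap
  · rw [Ideal.not_isPrime_iff] at hprime
    obtain ⟨x, hx, y, hy, hxy⟩ := hprime.resolve_left htop
    refine CWPhi.of_open I ?_ ih'
    obtain ⟨c, hc, hg⟩ := ih' (I ⊔ Ideal.span {y}) (left_lt_sup.2 (by
      rw [Ideal.span_singleton_le_iff_mem]; exact hy))
    refine ⟨x, hx, c, hc, fun F _ _ t h0 h1 hk hxt => hg F t h0 h1 ?_⟩
    have hyt : aeval t y = 0 := by
      have := hk _ hxy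
      rw [map_mul] at this
      exact (mul_eq_zero.1 this).resolve_left hxt
    have : I ⊔ Ideal.span {y} ≤ RingHom.ker (aeval t : ℤ[X] →ₐ[ℤ] F) :=
      sup_le (fun x hx => hk x hx) ((Ideal.span_singleton_le_iff_mem _).2 hyt)
    exact fun x hx => this hx
  by_cases hX : X ∈ I
  · refine ⟨1, one_pos, fun F _ _ t h0 _ hk => ?_⟩
    exact absurd (by simpa using hk _ hX) h0
  by_cases hX1 : X - 1 ∈ I
  · refine ⟨1, one_pos, fun F _ _ t _ h1 hk => ?_⟩
    exact absurd (by simpa [sub_eq_zero] using hk _ hX1) h1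
  by_cases hbot : I = ⊥
  · exact CWPhi.of_open I (hbot ▸ cw_open_bot) ih'
  by_cases hconst : ∀ a : ℤ, C a ∈ I → a = 0
  · exact CWPhi.of_open I (cw_open_deg I hX hX1 hbot hconst) ih'
  push Not at hconst
  obtain ⟨a, haI, ha⟩ := hconst
  have hp : ∃ p : ℕ, p.Prime ∧ C (p:ℤ) ∈ I := by
    have h1 : (I.comap (C : ℤ →+* ℤ[X])).IsPrime := Ideal.IsPrime.comap _
    have h2 : ((a.natAbs : ℕ) : ℤ) ∈ I.comap (C : ℤ →+* ℤ[X]) := by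
      have h3 : a ∈ I.comap (C : ℤ →+* ℤ[X]) := haI
      exact Ideal.mem_of_dvd _ (Int.dvd_natAbs.2 dvd_rfl) h3
    rw [← Nat.prod_primeFactorsList (Int.natAbs_ne_zero.2 ha)] at h2
    rw [Nat.cast_list_prod] at h2
    have h4 : (Multiset.map (fun n : ℕ => (n:ℤ)) (a.natAbs.primeFactorsList : Multiset ℕ)).prod ∈ I.comap (C : ℤ →+* ℤ[X]) := by
      simpa using h2
    obtain ⟨q', hq', hqI⟩ := (Ideal.IsPrime.multiset_prod_mem_iff_exists_mem h1 _).1 h4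
    obtain ⟨q, hq, rfl⟩ := Multiset.mem_map.1 hq'
    exact ⟨q, (Nat.prime_of_mem_primeFactorsList (Multiset.mem_coe.1 hq)), hqI⟩
  obtain ⟨p, hpp, hpI⟩ := hp
  by_cases hdiv : ∀ f ∈ I, C (p:ℤ) ∣ f
  · exact CWPhi.of_open I (cw_open_p p hpp I hpI hdiv) ih'
  · push Not at hdiv
    obtain ⟨f, hf, hnd⟩ := hdiv
    exact cw_phi_max p hpp I hX hX1 hpI f hf hnd

lemma cw_final :
    ∃ C : ℝ, 0 < C ∧
      ∀ (F : Type) (_ : Field F) (_ : Fintype F) (n : ℕ) (a b c : F),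
        a ≠ 0 → b ≠ 0 → c ≠ 0 → a + b + c = 0 →
        ∀ A' : Finset (Fin n → F),
          ∃ I : Finset (Fin n → F), I ⊆ A' ∧
            (∀ x ∈ I, ∀ y ∈ I, ∀ z ∈ I,
              a • x + b • y + c • z = 0 → x = y ∧ y = z) ∧
            C * ∑ x ∈ A',
                ((({p : (Fin n → F) × (Fin n → F) | p.1 ∈ A' ∧ p.2 ∈ A' ∧
                    a • x + b • p.1 + c • p.2 = 0}).ncard : ℝ) + 1) ^ (-(1/3 : ℝ))
              ≤ (I.card : ℝ) := by
  classical
  obtain ⟨C, hC, h⟩ := cw_phi_all ⊥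
  refine ⟨C, hC, ?_⟩
  intro F _ _ n a b c ha hb hc habc A'
  have key : ∀ x y z : Fin n → F, a • x + b • y + c • z = 0 ↔ x = y + (-c / a) • (z - y) := by
    intro x y z
    have hb' : b = -a - c := by linear_combination habc
    have e : a • x + b • y + c • z = a • (x - (y + (-c / a) • (z - y))) := by
      rw [hb', smul_sub, smul_add, smul_smul, mul_div_cancel₀ _ ha, smul_sub]
      module
    rw [e, smul_eq_zero, or_iff_right ha, sub_eq_zero]
  obtain ⟨I, hI, hcap, hcard⟩ := h F (-c / a) (div_ne_zero (neg_ne_zero.2 hc) ha) (by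
    rw [Ne, div_eq_one_iff_eq ha]
    intro h
    apply hb
    linear_combination habc + h) (by
      intro f hf
      rw [(Submodule.mem_bot _).1 hf, map_zero]) (Fin n → F) A'
  refine ⟨I, hI, ?_, ?_⟩
  · intro x hx y hy z hz hxyz
    have h1 := hcap x hx y hy z hz (by rw [one_smul, (key x y z).1 hxyz]; simp)
    exact ⟨h1.1, h1.2.symm⟩
  · refine le_trans (le_of_eq ?_) hcard
    congr 1
    refine sum_congr rfl fun x _ => ?_
    congr 3
    unfold cwDeg
    rw [← Set.ncard_coe_finset]
    congr 1
    ext ⟨y, z⟩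
    simp [key, and_assoc]

end CWHelpers


/-- **Lemma (Caro–Wei bound for solution-free subsets).**
There is an absolute constant `C > 0` such that for every finite field `F_q`, every
`n`, every admissible tuple `(a, b, c)` (i.e. `a, b, c ≠ 0`, `a + b + c = 0`) and
every finite `A' ⊆ F_q^n`, there is `I ⊆ A'` which is a cap set for `(a, b, c)`
(every `(x, y, z) ∈ I³` with `ax + by + cz = 0` has `x = y = z`) and satisfies
`|I| ≥ C * ∑_{x ∈ A'} (d_x + 1)^{-1/3}`, where `d_x` is the number of pairs
`(y, z) ∈ (A')²` with `ax + by + cz = 0`. -/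
theorem caro_wei_cap_subset :
    ∃ C : ℝ, 0 < C ∧
      ∀ (F : Type) (_ : Field F) (_ : Fintype F) (n : ℕ) (a b c : F),
        a ≠ 0 → b ≠ 0 → c ≠ 0 → a + b + c = 0 →
        ∀ A' : Finset (Fin n → F),
          ∃ I : Finset (Fin n → F), I ⊆ A' ∧
            (∀ x ∈ I, ∀ y ∈ I, ∀ z ∈ I,
              a • x + b • y + c • z = 0 → x = y ∧ y = z) ∧
            C * ∑ x ∈ A',
                ((({p : (Fin n → F) × (Fin n → F) | p.1 ∈ A' ∧ p.2 ∈ A' ∧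
                    a • x + b • p.1 + c • p.2 = 0}).ncard : ℝ) + 1) ^ (-(1/3 : ℝ))
              ≤ (I.card : ℝ) := by
  exact cw_final
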